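/- arXiv:2011.07752 — 2 statements merged into one kernel-verified Lean document; each statement's English description precedes it below -/
import Mathlib

section
/- Let H = (V,𝓔) be a hypergraph as above, let c, γ > 0, and let S* ⊆ V satisfy 0 < vol(S*) ≤ M/2 and φ(S*) ≤ γ/(8c). Let v be a random vertex drawn from a probability distribution ℙ supported on S* such that E_{v∼ℙ}[ p(γ,{v})(V∖S*) ] ≤ c · p(γ,S*)(V∖S*). Then with probability at least 1/2 over v ∼ ℙ, the sweep cut over x = x(γ,{v}) finds a set S_x with φ(S_x) ≤ δ̄ · sqrt( 32 γ ln( 100 vol(S*)/d_v ) ), where δ̄ = max_{e ∈ ∂S_x} min{ δ_e, |e|/2 } and ∂S_x = { e ∈ 𝓔 : e∩S_x ≠ ∅ and e∩(V∖S_x) ≠ ∅ }. -/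
/-!
The proof works with the exact minimizer and compares its Lovász–Simonovits curve with a concave
barrier.

*From the minimizer to flows.* At the optimal pair `(a, b)` of a hyperedge `ε`, set
`flow v = (x v - a)₊ - (b - x v)₊` for `v ∈ e ε`. Stationarity of the objective says that for every
set `T` the total flow out of `T` equals `γ * (seed mass of T - diffused mass of T)`, where the mass
of a vertex is `d v * x v` (`exists_stationary`, `Stationary.sum_eq`). This gives conservation of
mass, a maximum principle, and the leak bound
`γ * p(γ, S)(V ∖ S) ≤ cut S / vol S` (`Stationary.leak_le`). With `φ(S) ≤ γ / (8 c)` and the sampling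
hypothesis, the expected leak of a random seed is at most `1 / 8`; by Markov's inequality, with
probability at least `1 / 2` at least `3 / 4` of the mass remains in `S`.

*The second-difference inequality.* For an upper set `T` of `x`, the flow of a single hyperedge out
of `T` is at least one third of a difference of two weighted sums of `x`, over `e ε ∩ T` and
`e ε ∖ T`, with weights in `[0, 1]` of total exactly the splitting penalty of `T` in `ε`
(`exists_weights`). No factor `δ̄` is lost in this step. Summing over hyperedges,
`2 I(k) - I(k - C) - I(k + C) ≤ 3 γ (1 - I(k))`, where `I` is the Lovász–Simonovits curve of `x`,
`k = vol T`, and `C = cut T` (`Stationary.second_difference`).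

*The barrier.* Suppose all sweep sets have conductance at least `κ`, with `κ ^ 2 = 32 γ L` and
`L = log (100 vol S / d v)`. The concave function
`1 / 20 + k / M + (19 / 100 / L) * log (1 + 99 min (k, M - k) / d v)` has, at scale
`C ≥ κ min (k, M - k)`, second differences too negative for `I` to exceed it at a point where the
excess is maximal (`barrier_step`); such a maximum occurs at an upper set because `I` is
piecewise linear between volumes of upper sets (`fractional_le`). Hence `I` stays below the barrier,
and at `k = vol S ≤ M / 2` the barrier is less than `3 / 4` (`mass_lt`), contradicting the leak bound.

*The factor `δ̄`.* Since `δ̄ ≥ 1` whenever the sweep set cuts some hyperedge, and the conductance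
is `0` otherwise, the bound without `δ̄` implies the claim.
-/

open Finset

noncomputable section

/-- δ-linear splitting penalty of the set `S` within hyperedge `ε`:
`f_ε(e_ε ∩ S) = min {|e_ε ∩ S|, |e_ε ∖ S|, δ_ε}`. -/
def hsplit {V E : Type*} [DecidableEq V] (e : E → Finset V) (δe : E → ℝ)
    (ε : E) (S : Finset V) : ℝ :=
  min (min ((e ε ∩ S).card : ℝ) ((e ε \ S).card : ℝ)) (δe ε)

/-- Hypergraph cut `cut_H(S) = Σ_ε f_ε(e_ε ∩ S)`. -/
def hcut {V E : Type*} [Fintype E] [DecidableEq V] (e : E → Finset V) (δe : E → ℝ)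
    (S : Finset V) : ℝ :=
  ∑ ε : E, hsplit e δe ε S

/-- Degree `d_v = Σ_{ε : v ∈ e_ε} f_ε({v})`. -/
def hdeg {V E : Type*} [Fintype E] [DecidableEq V] (e : E → Finset V) (δe : E → ℝ)
    (v : V) : ℝ :=
  ∑ ε ∈ univ.filter (fun ε => v ∈ e ε), hsplit e δe ε {v}

/-- Volume `vol(S) = Σ_{v∈S} d_v`. -/
def hvol {V E : Type*} [Fintype E] [DecidableEq V] (e : E → Finset V) (δe : E → ℝ)
    (S : Finset V) : ℝ :=
  ∑ v ∈ S, hdeg e δe v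

/-- Total volume `M = vol(V)`. -/
def hM {V E : Type*} [Fintype V] [Fintype E] [DecidableEq V] (e : E → Finset V)
    (δe : E → ℝ) : ℝ :=
  hvol e δe univ

/-- Hypergraph conductance `φ(S) = cut_H(S) / min(vol S, M − vol S)`. -/
def hcond {V E : Type*} [Fintype V] [Fintype E] [DecidableEq V] (e : E → Finset V)
    (δe : E → ℝ) (S : Finset V) : ℝ :=
  hcut e δe S / min (hvol e δe S) (hM e δe - hvol e δe S)

/-- Inner gadget objective of hyperedge `ε`:
`Σ_{v∈e_ε} ((x_v−a)₊² + (b−x_v)₊²) + δ_ε (a−b)₊²`. -/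
def innerQ {V E : Type*} [DecidableEq V] (e : E → Finset V) (δe : E → ℝ) (ε : E)
    (x : V → ℝ) (a b : ℝ) : ℝ :=
  ∑ v ∈ e ε, ((max (x v - a) 0) ^ 2 + (max (b - x v) 0) ^ 2)
    + δe ε * (max (a - b) 0) ^ 2

/-- `Q_ε(x) = min_{a,b∈ℝ} innerQ`. -/
def Qe {V E : Type*} [DecidableEq V] (e : E → Finset V) (δe : E → ℝ) (ε : E)
    (x : V → ℝ) : ℝ :=
  sInf {q : ℝ | ∃ a b : ℝ, q = innerQ e δe ε x a b}

/-- The diffusion objective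
`Q(x) = γ Σ_v d_v (x_v − 1_S(v)/vol S)² + Σ_ε Q_ε(x)` for a seed set `S`. -/
def Qobj {V E : Type*} [Fintype V] [Fintype E] [DecidableEq V] (e : E → Finset V)
    (δe : E → ℝ) (γ : ℝ) (S : Finset V) (x : V → ℝ) : ℝ :=
  γ * ∑ v : V, hdeg e δe v * (x v - (if v ∈ S then 1 else 0) / hvol e δe S) ^ 2
    + ∑ ε : E, Qe e δe ε x

end

open Finset in
/-- The sweep set consisting of the first `j` vertices in the order `σ`. -/
def sweepSet {V : Type*} [DecidableEq V] {n : ℕ} (σ : Fin n ≃ V) (j : ℕ) : Finset V :=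
  (univ.filter (fun i : Fin n => (i : ℕ) < j)).image σ

/-- The boundary of `T`: hyperedges cut by `T`. -/
def hbdry {V E : Type*} [DecidableEq V] (e : E → Finset V) (T : Finset V) : Set E :=
  {ε | (e ε ∩ T).Nonempty ∧ (e ε \ T).Nonempty}

/-- `δ̄(T) = max_{ε ∈ ∂T} min{δ_ε, |e_ε|/2}` (with value `0` if `∂T = ∅`). -/
noncomputable def deltaBar {V E : Type*} [DecidableEq V] (e : E → Finset V)
    (δe : E → ℝ) (T : Finset V) : ℝ :=
  sSup ((fun ε => min (δe ε) (((e ε).card : ℝ) / 2)) '' hbdry e T)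

namespace HCheeger

open Finset

/-! ### Gadget minimizers and the first-order conditions -/

theorem posPart_sq_step (z h : ℝ) :
    (max (z + h) 0) ^ 2 ≤ (max z 0) ^ 2 + 2 * h * max z 0 + h ^ 2 := by
  rcases le_total z 0 with hz | hz <;> rcases le_total (z + h) 0 with hh | hh
  · rw [max_eq_right hz, max_eq_right hh]; nlinarith [sq_nonneg h]
  · rw [max_eq_right hz, max_eq_left hh]; nlinarith [sq_nonneg h]
  · rw [max_eq_left hz, max_eq_right hh]; nlinarith [sq_nonneg (z + h)]
  · rw [max_eq_left hz, max_eq_left hh]; nlinarith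

theorem eq_zero_of_quad_nonneg (G K : ℝ) (h : ∀ t : ℝ, 0 ≤ t * G + K * t ^ 2) : G = 0 := by
  by_contra hG
  have hG2 : 0 < G ^ 2 := by positivity
  have hK : 0 < |K| + 1 := by positivity
  have h1 := h (-G / (|K| + 1) / 2)
  have h2 : K * (-G / (|K| + 1) / 2) ^ 2 ≤ (|K| + 1) * (-G / (|K| + 1) / 2) ^ 2 :=
    mul_le_mul_of_nonneg_right (by linarith [le_abs_self K]) (sq_nonneg _)
  have h3 : (-G / (|K| + 1) / 2) * G + (|K| + 1) * (-G / (|K| + 1) / 2) ^ 2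
      = - (G ^ 2 / (4 * (|K| + 1))) := by
    field_simp; ring
  have h4 : 0 < G ^ 2 / (4 * (|K| + 1)) := by positivity
  linarith

/-- The net flow of vertex `u` into the gadget with auxiliary values `a`, `b`: half of the
partial derivative in `x u` of the gadget objective. -/
noncomputable def flow {V : Type*} (x : V → ℝ) (a b : ℝ) (u : V) : ℝ :=
  max (x u - a) 0 - max (b - x u) 0

/-- Flow conservation at the two auxiliary nodes of the gadget of a hyperedge `s`: the flow into
`a`, the flow from `a` to `b` and the flow out of `b` agree. -/
def Balanced {V : Type*} (s : Finset V) (x : V → ℝ) (δ a b : ℝ) : Prop :=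
  ∑ v ∈ s, max (x v - a) 0 = δ * max (a - b) 0 ∧
  ∑ v ∈ s, max (b - x v) 0 = δ * max (a - b) 0

section
variable {V E : Type*} [DecidableEq V] (e : E → Finset V) (δe : E → ℝ) (ε : E) (x : V → ℝ)

theorem innerQ_nonneg (hδ : 1 ≤ δe ε) (a b : ℝ) : 0 ≤ innerQ e δe ε x a b := by
  unfold innerQ
  have : 0 ≤ δe ε := by linarith
  positivity

theorem continuous_innerQ : Continuous fun p : ℝ × ℝ => innerQ e δe ε x p.1 p.2 := by
  unfold innerQ
  fun_prop

/-- The infimum defining `Qe` is attained, because `innerQ` is continuous and coercive. -/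
theorem exists_innerQ_min (hδ : 1 ≤ δe ε) (hne : (e ε).Nonempty) :
    ∃ a b : ℝ, ∀ a' b' : ℝ, innerQ e δe ε x a b ≤ innerQ e δe ε x a' b' := by
  obtain ⟨u, hu⟩ := hne
  set K := innerQ e δe ε x 0 0 with hK
  have hK0 : 0 ≤ K := innerQ_nonneg e δe ε x hδ 0 0
  set r := Real.sqrt K + |x u| with hr
  have hs0 : 0 ≤ Real.sqrt K := Real.sqrt_nonneg _
  -- every point of the sublevel set of `(0, 0)` lies in this box
  have hbox : ∀ a b : ℝ, innerQ e δe ε x a b ≤ K →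
      a ∈ Set.Icc (-(2 * r)) (2 * r) ∧ b ∈ Set.Icc (-(2 * r)) (2 * r) := by
    intro a b hab
    have hterm : (max (x u - a) 0) ^ 2 + (max (b - x u) 0) ^ 2 ≤
        ∑ v ∈ e ε, ((max (x v - a) 0) ^ 2 + (max (b - x v) 0) ^ 2) :=
      Finset.single_le_sum (f := fun v => (max (x v - a) 0) ^ 2 + (max (b - x v) 0) ^ 2)
        (fun v _ => by positivity) hu
    have hsum0 : 0 ≤ ∑ v ∈ e ε, ((max (x v - a) 0) ^ 2 + (max (b - x v) 0) ^ 2) :=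
      Finset.sum_nonneg fun v _ => by positivity
    unfold innerQ at hab
    have hδm : (max (a - b) 0) ^ 2 ≤ δe ε * (max (a - b) 0) ^ 2 := by
      nlinarith [sq_nonneg (max (a - b) 0)]
    have h1 : max (x u - a) 0 ≤ Real.sqrt K :=
      Real.le_sqrt_of_sq_le (by nlinarith [sq_nonneg (max (b - x u) 0), sq_nonneg (max (a - b) 0)])
    have h2 : max (b - x u) 0 ≤ Real.sqrt K :=
      Real.le_sqrt_of_sq_le (by nlinarith [sq_nonneg (max (x u - a) 0), sq_nonneg (max (a - b) 0)])
    have h3 : max (a - b) 0 ≤ Real.sqrt K :=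
      Real.le_sqrt_of_sq_le (by linarith)
    have h1' := (le_max_left _ _).trans h1
    have h2' := (le_max_left _ _).trans h2
    have h3' := (le_max_left _ _).trans h3
    have := abs_le.1 (le_refl |x u|)
    have := abs_nonneg (x u)
    refine ⟨⟨?_, ?_⟩, ⟨?_, ?_⟩⟩ <;> linarith
  have hcomp : IsCompact (Set.Icc (-(2 * r)) (2 * r) ×ˢ Set.Icc (-(2 * r)) (2 * r)) :=
    isCompact_Icc.prod isCompact_Icc
  have h00 := hbox 0 0 le_rfl
  obtain ⟨p, hp, hmin⟩ := hcomp.exists_isMinOn ⟨(0, 0), h00⟩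
    (continuous_innerQ e δe ε x).continuousOn
  refine ⟨p.1, p.2, fun a' b' => ?_⟩
  by_cases h : innerQ e δe ε x a' b' ≤ K
  · exact hmin (show (a', b') ∈ _ from hbox a' b' h)
  · exact (hmin (show ((0 : ℝ), (0 : ℝ)) ∈ _ from h00)).trans (le_of_not_ge h)

theorem Qe_le (hδ : 1 ≤ δe ε) (a b : ℝ) : Qe e δe ε x ≤ innerQ e δe ε x a b :=
  csInf_le ⟨0, by rintro _ ⟨a, b, rfl⟩; exact innerQ_nonneg e δe ε x hδ a b⟩ ⟨a, b, rfl⟩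

theorem Qe_eq {a b : ℝ} (h : ∀ a' b', innerQ e δe ε x a b ≤ innerQ e δe ε x a' b') :
    Qe e δe ε x = innerQ e δe ε x a b :=
  IsLeast.csInf_eq ⟨⟨a, b, rfl⟩, by rintro _ ⟨a', b', rfl⟩; exact h a' b'⟩

theorem balanced_of_min {a b : ℝ}
    (h : ∀ a' b', innerQ e δe ε x a b ≤ innerQ e δe ε x a' b') (hδ : 0 ≤ δe ε) :
    Balanced (e ε) x (δe ε) a b := by
  have hcardK : ∀ t : ℝ, ∑ v ∈ e ε, t ^ 2 = (e ε).card * t ^ 2 := by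
    intro t; rw [Finset.sum_const, nsmul_eq_mul]
  constructor
  · have := eq_zero_of_quad_nonneg
      (2 * (δe ε * max (a - b) 0 - ∑ v ∈ e ε, max (x v - a) 0)) ((e ε).card + δe ε) (by
        intro t
        have h1 := h (a + t) b
        unfold innerQ at h1
        have h2 : ∑ v ∈ e ε, ((max (x v - (a + t)) 0) ^ 2 + (max (b - x v) 0) ^ 2) ≤
            ∑ v ∈ e ε, (((max (x v - a) 0) ^ 2 + (max (b - x v) 0) ^ 2)
              + (-(2 * t) * max (x v - a) 0 + t ^ 2)) := by
          refine Finset.sum_le_sum fun v _ => ?_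
          have := posPart_sq_step (x v - a) (-t)
          rw [show x v - a + -t = x v - (a + t) by ring] at this
          nlinarith
        rw [Finset.sum_add_distrib (g := fun v => -(2 * t) * max (x v - a) 0 + t ^ 2),
          Finset.sum_add_distrib (f := fun v => -(2 * t) * max (x v - a) 0), hcardK,
          ← Finset.mul_sum] at h2
        have h3 := posPart_sq_step (a - b) t
        rw [show a - b + t = a + t - b by ring] at h3
        have h4 := mul_le_mul_of_nonneg_left h3 hδ
        nlinarith)
    linarith
  · have := eq_zero_of_quad_nonneg
      (2 * (∑ v ∈ e ε, max (b - x v) 0 - δe ε * max (a - b) 0)) ((e ε).card + δe ε) (by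
        intro t
        have h1 := h a (b + t)
        unfold innerQ at h1
        have h2 : ∑ v ∈ e ε, ((max (x v - a) 0) ^ 2 + (max (b + t - x v) 0) ^ 2) ≤
            ∑ v ∈ e ε, (((max (x v - a) 0) ^ 2 + (max (b - x v) 0) ^ 2)
              + (2 * t * max (b - x v) 0 + t ^ 2)) := by
          refine Finset.sum_le_sum fun v _ => ?_
          have := posPart_sq_step (b - x v) t
          rw [show b - x v + t = b + t - x v by ring] at this
          nlinarith
        rw [Finset.sum_add_distrib (g := fun v => 2 * t * max (b - x v) 0 + t ^ 2),
          Finset.sum_add_distrib (f := fun v => 2 * t * max (b - x v) 0), hcardK,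
          ← Finset.mul_sum] at h2
        have h3 := posPart_sq_step (a - b) (-t)
        rw [show a - b + -t = a - (b + t) by ring] at h3
        have h4 := mul_le_mul_of_nonneg_left h3 hδ
        nlinarith)
    linarith

end

/-- First-order conditions for a minimizer of the diffusion objective: balanced gadgets, and
vanishing of the derivative of the objective in every direction `h`. -/
def Stationary {V E : Type*} [Fintype V] [Fintype E] [DecidableEq V] (e : E → Finset V)
    (δe : E → ℝ) (γ : ℝ) (s x : V → ℝ) (a b : E → ℝ) : Prop :=
  (∀ ε, Balanced (e ε) x (δe ε) (a ε) (b ε)) ∧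
  ∀ h : V → ℝ, γ * ∑ v, hdeg e δe v * (h v * (s v - x v)) =
    ∑ ε, ∑ v ∈ e ε, h v * flow x (a ε) (b ε) v

/-- A minimizer of the diffusion objective satisfies the first-order conditions, for optimal auxiliary
values `a`, `b` of the gadgets. -/
theorem exists_stationary {V E : Type*} [Fintype V] [Fintype E] [DecidableEq V]
    (e : E → Finset V) (δe : E → ℝ) (hcard : ∀ ε, 2 ≤ (e ε).card) (hδe : ∀ ε, 1 ≤ δe ε)
    (γ : ℝ) (S : Finset V) (x : V → ℝ) (hx : ∀ y, Qobj e δe γ S x ≤ Qobj e δe γ S y) :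
    ∃ a b : E → ℝ,
      Stationary e δe γ (fun v => (if v ∈ S then 1 else 0) / hvol e δe S) x a b := by
  have hne : ∀ ε, (e ε).Nonempty := fun ε => Finset.card_pos.1 (by linarith [hcard ε])
  choose a b hab using fun ε => exists_innerQ_min e δe ε x (hδe ε) (hne ε)
  refine ⟨a, b, fun ε => balanced_of_min e δe ε x (hab ε) (by linarith [hδe ε]), fun h => ?_⟩
  set s : V → ℝ := fun v => (if v ∈ S then 1 else 0) / hvol e δe S with hs
  have key := eq_zero_of_quad_nonneg
    (2 * (∑ ε, ∑ v ∈ e ε, h v * flow x (a ε) (b ε) v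
      - γ * ∑ v, hdeg e δe v * (h v * (s v - x v))))
    (γ * ∑ v, hdeg e δe v * h v ^ 2 + ∑ ε, ∑ v ∈ e ε, 2 * h v ^ 2) (by
      intro t
      have h1 := hx (fun v => x v + t * h v)
      unfold Qobj at h1
      have h2 : ∑ ε, Qe e δe ε (fun v => x v + t * h v) ≤
          ∑ ε, (innerQ e δe ε x (a ε) (b ε) + ((2 * t) * ∑ v ∈ e ε, h v * flow x (a ε) (b ε) v
            + t ^ 2 * ∑ v ∈ e ε, 2 * h v ^ 2)) := by
        refine Finset.sum_le_sum fun ε _ => (Qe_le e δe ε _ (hδe ε) (a ε) (b ε)).trans ?_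
        unfold innerQ
        rw [add_right_comm]
        refine add_le_add ?_ le_rfl
        rw [Finset.mul_sum, Finset.mul_sum, ← Finset.sum_add_distrib, ← Finset.sum_add_distrib]
        refine Finset.sum_le_sum fun v _ => ?_
        have h3 := posPart_sq_step (x v - a ε) (t * h v)
        have h4 := posPart_sq_step (b ε - x v) (-(t * h v))
        rw [show x v - a ε + t * h v = x v + t * h v - a ε by ring] at h3
        rw [show b ε - x v + -(t * h v) = b ε - (x v + t * h v) by ring] at h4
        unfold flow
        nlinarith
      rw [Finset.sum_add_distrib, Finset.sum_add_distrib, ← Finset.mul_sum, ← Finset.mul_sum] at h2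
      have h5 : ∑ ε, Qe e δe ε x = ∑ ε, innerQ e δe ε x (a ε) (b ε) :=
        Finset.sum_congr rfl fun ε _ => Qe_eq e δe ε x (hab ε)
      have h6 : ∑ v : V, hdeg e δe v * (x v + t * h v - s v) ^ 2 =
          ∑ v : V, hdeg e δe v * (x v - s v) ^ 2
            - 2 * t * ∑ v, hdeg e δe v * (h v * (s v - x v))
            + t ^ 2 * ∑ v, hdeg e δe v * h v ^ 2 := by
        rw [Finset.mul_sum, Finset.mul_sum, ← Finset.sum_sub_distrib, ← Finset.sum_add_distrib]
        exact Finset.sum_congr rfl fun v _ => by ring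
      have h7 : γ * ∑ v : V, hdeg e δe v * (x v - s v) ^ 2 + ∑ ε, Qe e δe ε x ≤
        γ * ∑ v : V, hdeg e δe v * (x v + t * h v - s v) ^ 2
          + ∑ ε, Qe e δe ε (fun v => x v + t * h v) := h1
      rw [h6, h5] at h7
      nlinarith)
  linarith

/-! ### Balanced gadgets -/

section
variable {V : Type*} {s : Finset V} {x : V → ℝ} {δ a b : ℝ}

theorem Balanced.le (h : Balanced s x δ a b) (hs : s.Nonempty) : b ≤ a := by
  by_contra hab
  push Not at hab
  obtain ⟨u, hu⟩ := hs
  have h0 : max (a - b) 0 = 0 := max_eq_right (by linarith)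
  have h1 := h.1
  have h2 := h.2
  rw [h0, mul_zero] at h1 h2
  have h3 := (Finset.sum_eq_zero_iff_of_nonneg fun v _ => le_max_right _ _).1 h1 u hu
  have h4 := (Finset.sum_eq_zero_iff_of_nonneg fun v _ => le_max_right _ _).1 h2 u hu
  have h5 := le_max_left (x u - a) 0
  have h6 := le_max_left (b - x u) 0
  linarith

/-- Reversing the order of the values exchanges the roles of the two auxiliary nodes. -/
theorem Balanced.neg (h : Balanced s x δ a b) : Balanced s (fun v => -x v) δ (-b) (-a) := by
  refine ⟨?_, ?_⟩
  · rw [show -b - -a = a - b by ring, ← h.2]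
    exact Finset.sum_congr rfl fun v _ => by congr 1; ring
  · rw [show -b - -a = a - b by ring, ← h.1]
    exact Finset.sum_congr rfl fun v _ => by congr 1; ring

theorem flow_neg (u : V) : flow (fun v => -x v) (-b) (-a) u = -flow x a b u := by
  unfold flow
  rw [show -x u - -b = b - x u by ring, show -a - -x u = x u - a by ring]; ring

theorem Balanced.sum_flow (h : Balanced s x δ a b) : ∑ v ∈ s, flow x a b v = 0 := by
  unfold flow
  rw [Finset.sum_sub_distrib, h.1, h.2, sub_self]

theorem Balanced.sum_flow_inter_add [DecidableEq V] (h : Balanced s x δ a b) (T : Finset V) :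
    ∑ v ∈ s ∩ T, flow x a b v + ∑ v ∈ s \ T, flow x a b v = 0 := by
  rw [Finset.sum_inter_add_sum_sdiff, h.sum_flow]

theorem Balanced.flow_nonneg_of_max (h : Balanced s x δ a b) {u : V} (hu : u ∈ s)
    (hmax : ∀ v ∈ s, x v ≤ x u) : 0 ≤ flow x a b u := by
  have hab := h.le ⟨u, hu⟩
  have hb : b ≤ x u := by
    by_contra hlt
    push Not at hlt
    have h1 : ∑ v ∈ s, max (x v - a) 0 = 0 :=
      Finset.sum_eq_zero fun v hv => max_eq_right (by linarith [hmax v hv])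
    have h2 : ∑ v ∈ s, max (b - x v) 0 = 0 := by rw [h.2, ← h.1, h1]
    have h3 := (Finset.sum_eq_zero_iff_of_nonneg fun v _ => le_max_right _ _).1 h2 u hu
    linarith [le_max_left (b - x u) 0]
  unfold flow
  rw [max_eq_right (show b - x u ≤ 0 by linarith), sub_zero]
  exact le_max_right _ _

theorem Balanced.flow_nonpos_of_min (h : Balanced s x δ a b) {u : V} (hu : u ∈ s)
    (hmin : ∀ v ∈ s, x u ≤ x v) : flow x a b u ≤ 0 := by
  have := h.neg.flow_nonneg_of_max hu (fun v hv => neg_le_neg (hmin v hv))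
  rw [flow_neg] at this
  linarith

/-- For values in `[0, m]`, the flow from `T` through a gadget is at most `m` times its splitting
penalty. -/
theorem Balanced.sum_flow_le [DecidableEq V] (h : Balanced s x δ a b) (hs : s.Nonempty) (hδ : 0 < δ) {m : ℝ}
    (h0 : ∀ v ∈ s, 0 ≤ x v) (hm : ∀ v ∈ s, x v ≤ m) (T : Finset V) :
    ∑ v ∈ s ∩ T, flow x a b v ≤
      m * min (min ((s ∩ T).card : ℝ) ((s \ T).card : ℝ)) δ := by
  have hab := h.le hs
  have hm0 : 0 ≤ m := by obtain ⟨u, hu⟩ := hs; exact (h0 u hu).trans (hm u hu)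
  have ha0 : 0 ≤ a := by
    by_contra hlt
    push Not at hlt
    obtain ⟨u, hu⟩ := hs
    have h2 : ∑ v ∈ s, max (b - x v) 0 = 0 :=
      Finset.sum_eq_zero fun v hv => max_eq_right (by linarith [h0 v hv])
    have h1 : ∑ v ∈ s, max (x v - a) 0 = 0 := by rw [h.1, ← h.2, h2]
    have h3 := (Finset.sum_eq_zero_iff_of_nonneg fun v _ => le_max_right _ _).1 h1 u hu
    linarith [le_max_left (x u - a) 0, h0 u hu]
  have hbm : b ≤ m := by
    by_contra hlt
    push Not at hlt
    obtain ⟨u, hu⟩ := hs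
    have h1 : ∑ v ∈ s, max (x v - a) 0 = 0 :=
      Finset.sum_eq_zero fun v hv => max_eq_right (by linarith [hm v hv])
    have h2 : ∑ v ∈ s, max (b - x v) 0 = 0 := by rw [h.2, ← h.1, h1]
    have h3 := (Finset.sum_eq_zero_iff_of_nonneg fun v _ => le_max_right _ _).1 h2 u hu
    linarith [le_max_left (b - x u) 0, hm u hu]
  have hdiff : max (a - b) 0 ≤ m := by
    refine max_le ?_ hm0
    by_contra hlt
    push Not at hlt
    rcases le_or_gt m a with hma | hma
    · have h1 : ∑ v ∈ s, max (x v - a) 0 = 0 :=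
        Finset.sum_eq_zero fun v hv => max_eq_right (by linarith [hm v hv])
      rw [h.1, max_eq_left (by linarith)] at h1
      have : 0 < δ * (a - b) := mul_pos hδ (by linarith)
      linarith
    · have h1 : ∑ v ∈ s, max (b - x v) 0 = 0 :=
        Finset.sum_eq_zero fun v hv => max_eq_right (by linarith [h0 v hv])
      rw [h.2, max_eq_left (by linarith)] at h1
      have : 0 < δ * (a - b) := mul_pos hδ (by linarith)
      linarith
  have hA : ∑ v ∈ s ∩ T, flow x a b v ≤ m * ((s ∩ T).card : ℝ) := by
    rw [mul_comm, ← nsmul_eq_mul]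
    refine Finset.sum_le_card_nsmul _ _ _ fun v hv => ?_
    have hv' := (Finset.mem_inter.1 hv).1
    have : max (x v - a) 0 ≤ m := max_le (by linarith [hm v hv']) hm0
    unfold flow
    linarith [le_max_right (b - x v) 0]
  have hB : ∑ v ∈ s ∩ T, flow x a b v ≤ m * ((s \ T).card : ℝ) := by
    have := h.sum_flow_inter_add T
    have h2 : ∑ v ∈ s \ T, -flow x a b v ≤ m * ((s \ T).card : ℝ) := by
      rw [mul_comm, ← nsmul_eq_mul]
      refine Finset.sum_le_card_nsmul _ _ _ fun v hv => ?_
      have hv' := (Finset.mem_sdiff.1 hv).1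
      have : max (b - x v) 0 ≤ m := max_le (by linarith [h0 v hv']) hm0
      unfold flow
      linarith [le_max_right (x v - a) 0]
    rw [Finset.sum_neg_distrib] at h2
    linarith
  have hC : ∑ v ∈ s ∩ T, flow x a b v ≤ m * δ := by
    calc ∑ v ∈ s ∩ T, flow x a b v ≤ ∑ v ∈ s ∩ T, max (x v - a) 0 :=
          Finset.sum_le_sum fun v _ => by unfold flow; linarith [le_max_right (b - x v) 0]
      _ ≤ ∑ v ∈ s, max (x v - a) 0 :=
          Finset.sum_le_sum_of_subset_of_nonneg Finset.inter_subset_left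
            fun v _ _ => le_max_right _ _
      _ = δ * max (a - b) 0 := h.1
      _ ≤ m * δ := by rw [mul_comm]; exact mul_le_mul_of_nonneg_right hdiff hδ.le
  rcases min_choice (min ((s ∩ T).card : ℝ) ((s \ T).card : ℝ)) δ with h1 | h1 <;> rw [h1]
  · rcases min_choice ((s ∩ T).card : ℝ) ((s \ T).card : ℝ) with h2 | h2 <;> rw [h2]
    · exact hA
    · exact hB
  · exact hC

/-- The weights of the following lemma in the case where the upper part `P` of the hyperedge lies
above `b`. Mass `f` is spread uniformly over `P`; on the lower part `N`, it is first placed on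
the vertices above `a`, and only the remainder is spread over the others. -/
theorem exists_weights_aux [DecidableEq V] {P N : Finset V} (hPN : Disjoint P N)
    (h : Balanced (P ∪ N) x δ a b) (hab : b ≤ a)
    (hlev : ∀ u ∈ P, ∀ w ∈ N, x w ≤ x u) {f : ℝ} (hf : 0 < f) (hfP : f ≤ P.card)
    (hfN : f ≤ N.card) (hfδ : f ≤ δ) (hb : ∀ u ∈ P, b ≤ x u) :
    ∃ α : V → ℝ, (∀ v, 0 ≤ α v) ∧ (∀ v, α v ≤ 1) ∧ ∑ v ∈ P, α v = f ∧ ∑ v ∈ N, α v = f ∧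
      ∑ v ∈ P, α v * x v - ∑ v ∈ N, α v * x v ≤ 3 * ∑ v ∈ P, flow x a b v := by
  set g := ∑ v ∈ P, max (x v - a) 0 with hg
  set U := N.filter (fun v => a < x v) with hU
  set W := N.filter (fun v => ¬ a < x v) with hW
  set y := ∑ v ∈ U, (x v - a) with hy
  have hg0 : 0 ≤ g := Finset.sum_nonneg fun v _ => le_max_right _ _
  have hy0 : 0 ≤ y := Finset.sum_nonneg fun v hv => by
    linarith [(Finset.mem_filter.1 hv).2]
  have hflow : ∑ v ∈ P, flow x a b v = g :=
    Finset.sum_congr rfl fun v hv => by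
      unfold flow; rw [max_eq_right (show b - x v ≤ 0 by linarith [hb v hv]), sub_zero]
  have hNy : ∑ v ∈ N, max (x v - a) 0 = y := by
    rw [← Finset.sum_filter_add_sum_filter_not N (fun v => a < x v)]
    have h1 : ∑ v ∈ N.filter (fun v => ¬ a < x v), max (x v - a) 0 = 0 :=
      Finset.sum_eq_zero fun v hv => max_eq_right (by linarith [(Finset.mem_filter.1 hv).2])
    rw [h1, add_zero]
    exact Finset.sum_congr rfl fun v hv => max_eq_left (by linarith [(Finset.mem_filter.1 hv).2])
  have hgy : g + y = δ * (a - b) := by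
    have := h.1
    rw [Finset.sum_union hPN, hNy, max_eq_left (by linarith)] at this
    exact this
  have hbN : ∑ v ∈ N, max (b - x v) 0 = g + y := by
    have := h.2
    rw [Finset.sum_union hPN, max_eq_left (show 0 ≤ a - b by linarith), ← hgy] at this
    have h0 : ∑ v ∈ P, max (b - x v) 0 = 0 :=
      Finset.sum_eq_zero fun v hv => max_eq_right (by linarith [hb v hv])
    linarith
  have hP0 : (0 : ℝ) < P.card := by linarith
  have hcardN : (U.card : ℝ) + W.card = N.card := by
    exact_mod_cast Finset.card_filter_add_card_filter_not (s := N) (fun v => a < x v)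
  -- the average excess over `a` is smaller on `U` than on `P`
  have hyk : y * P.card ≤ U.card * g := by
    have h1 : ∀ w ∈ U, (x w - a) * P.card ≤ g := by
      intro w hw
      rw [mul_comm, ← nsmul_eq_mul]
      refine Finset.card_nsmul_le_sum _ _ _ fun v hv => ?_
      have := hlev v hv w (Finset.mem_filter.1 hw).1
      exact le_max_of_le_left (by linarith)
    rw [hy, Finset.sum_mul, ← nsmul_eq_mul]
    exact Finset.sum_le_card_nsmul _ _ _ h1
  have hsplitN : ∀ F : V → ℝ, ∑ v ∈ N, F v = ∑ v ∈ U, F v + ∑ v ∈ W, F v := fun F =>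
    (Finset.sum_filter_add_sum_filter_not N _ _).symm
  have hfP1 : f / P.card ≤ 1 := (div_le_one hP0).2 hfP
  have hPx : f / P.card * ∑ v ∈ P, x v ≤ f * a + g := by
    rw [Finset.mul_sum]
    have h1 : ∑ v ∈ P, f / P.card * x v ≤ ∑ v ∈ P, (f / P.card * a + max (x v - a) 0) := by
      refine Finset.sum_le_sum fun v _ => ?_
      have h2 := le_max_left (x v - a) 0
      have h3 := le_max_right (x v - a) 0
      have h4 : 0 ≤ f / P.card := by positivity
      nlinarith
    rw [Finset.sum_add_distrib, Finset.sum_const, nsmul_eq_mul] at h1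
    have : (P.card : ℝ) * (f / P.card * a) = f * a := by field_simp
    linarith
  have hPnot : ∀ v ∈ N, v ∉ P := fun v hv hv' => Finset.disjoint_left.1 hPN hv' hv
  rw [hflow]
  have hweights : ∀ p q r : ℝ, 0 ≤ p → p ≤ 1 → 0 ≤ q → q ≤ 1 → 0 ≤ r → r ≤ 1 →
      p * P.card = f → q * U.card + r * W.card = f →
      p * ∑ v ∈ P, x v - (q * ∑ v ∈ U, x v + r * ∑ v ∈ W, x v) ≤ 3 * g →
      ∃ α : V → ℝ, (∀ v, 0 ≤ α v) ∧ (∀ v, α v ≤ 1) ∧ ∑ v ∈ P, α v = f ∧ ∑ v ∈ N, α v = f ∧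
        ∑ v ∈ P, α v * x v - ∑ v ∈ N, α v * x v ≤ 3 * g := by
    intro p q r hp0 hp1 hq0 hq1 hr0 hr1 hp hqr hle
    obtain ⟨α, hα⟩ : ∃ α : V → ℝ, α = fun v => if v ∈ P then p else if v ∈ U then q else r :=
      ⟨_, rfl⟩
    have hαP : ∀ v ∈ P, α v = p := fun v hv => by rw [hα]; exact if_pos hv
    have hαU : ∀ v ∈ U, α v = q := fun v hv => by
      rw [hα]
      exact (if_neg (hPnot v (Finset.mem_filter.1 hv).1)).trans (if_pos hv)
    have hαW : ∀ v ∈ W, α v = r := fun v hv => by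
      rw [hα]
      exact (if_neg (hPnot v (Finset.mem_filter.1 hv).1)).trans (if_neg (show v ∉ U from fun hv' =>
        (Finset.mem_filter.1 hv).2 (Finset.mem_filter.1 hv').2))
    have hs : ∀ (A : Finset V) (t : ℝ), (∀ v ∈ A, α v = t) → ∑ v ∈ A, α v = t * A.card :=
      fun A t hA => by
        rw [Finset.sum_congr rfl hA, Finset.sum_const, nsmul_eq_mul, mul_comm]
    have hx : ∀ (A : Finset V) (t : ℝ), (∀ v ∈ A, α v = t) →
        ∑ v ∈ A, α v * x v = t * ∑ v ∈ A, x v := fun A t hA => by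
      rw [Finset.mul_sum]
      exact Finset.sum_congr rfl fun v hv => by rw [hA v hv]
    refine ⟨α, fun v => ?_, fun v => ?_, ?_, ?_, ?_⟩
    · rw [hα]; dsimp only; split_ifs <;> assumption
    · rw [hα]; dsimp only; split_ifs <;> assumption
    · rw [hs P p hαP, hp]
    · rw [hsplitN, hs U q hαU, hs W r hαW, hqr]
    · rw [hsplitN, hx P p hαP, hx U q hαU, hx W r hαW]
      exact hle
  have hUx : ∑ v ∈ U, x v = y + U.card * a := by
    rw [hy, Finset.sum_sub_distrib, Finset.sum_const, nsmul_eq_mul]; ring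
  rcases le_or_gt f U.card with hfu | hfu
  · have hU0 : (0 : ℝ) < U.card := by linarith
    have hq : f / U.card * U.card = f := by field_simp
    have hq0 : 0 ≤ f / U.card := by positivity
    refine hweights (f / P.card) (f / U.card) 0 (by positivity) hfP1 hq0
      ((div_le_one hU0).2 hfu) le_rfl zero_le_one (by field_simp) (by linarith) ?_
    rw [hUx]
    have h1 : f / U.card * (y + U.card * a) = f / U.card * y + f * a := by
      rw [mul_add, ← mul_assoc, hq]
    have := mul_nonneg hq0 hy0
    linarith
  · have hW0 : (0 : ℝ) < W.card := by linarith
    obtain ⟨β, hβ⟩ : ∃ β, β = (f - U.card) / (W.card : ℝ) := ⟨_, rfl⟩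
    have hβ0 : 0 ≤ β := by rw [hβ]; exact div_nonneg (by linarith) hW0.le
    have hβ1 : β ≤ 1 := by rw [hβ]; exact (div_le_one hW0).2 (by linarith)
    have hβW : β * W.card = f - U.card := by rw [hβ]; field_simp
    refine hweights (f / P.card) 1 β (by positivity) hfP1 zero_le_one le_rfl hβ0 hβ1
      (by field_simp) (by linarith) ?_
    have hWx : (f - U.card) * b - (g + y) ≤ β * ∑ v ∈ W, x v := by
      have h1 : ∑ v ∈ W, (β * b - max (b - x v) 0) ≤ ∑ v ∈ W, β * x v := by
        refine Finset.sum_le_sum fun v _ => ?_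
        have h2 := le_max_left (b - x v) 0
        have h3 := le_max_right (b - x v) 0
        nlinarith
      have h4 : ∑ v ∈ W, max (b - x v) 0 ≤ g + y := by
        rw [← hbN]
        exact Finset.sum_le_sum_of_subset_of_nonneg (Finset.filter_subset _ _)
          fun v _ _ => le_max_right _ _
      rw [Finset.sum_sub_distrib, Finset.sum_const, nsmul_eq_mul, ← Finset.mul_sum] at h1
      have : (W.card : ℝ) * (β * b) = (f - U.card) * b := by rw [← hβW]; ring
      linarith
    -- with `ρ = |U| / f`: the drop from `a` to `b` costs `(1 - ρ) (g + y)`, and `y ≤ ρ g`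
    obtain ⟨ρ, hρ⟩ : ∃ ρ, ρ = (U.card : ℝ) / f := ⟨_, rfl⟩
    have hρf : (U.card : ℝ) = ρ * f := by rw [hρ]; field_simp
    have hρ1 : ρ ≤ 1 := by rw [hρ]; exact (div_le_one hf).2 hfu.le
    have hyg : y ≤ ρ * g := by
      have h1 : y * f ≤ y * P.card := mul_le_mul_of_nonneg_left hfP hy0
      rw [hρf] at hyk
      have h2 : y * f ≤ (ρ * g) * f := by linarith
      exact le_of_mul_le_mul_right h2 hf
    have hdrop : (f - U.card) * (a - b) ≤ (1 - ρ) * (g + y) := by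
      rw [hgy, hρf]
      have h1 : f * (a - b) ≤ δ * (a - b) := mul_le_mul_of_nonneg_right hfδ (by linarith)
      have h2 := mul_le_mul_of_nonneg_left h1 (show 0 ≤ 1 - ρ by linarith)
      linarith
    have h1 := mul_le_mul_of_nonneg_left hyg (show 0 ≤ 1 - ρ by linarith)
    have h2 := mul_nonneg (sq_nonneg ρ) hg0
    rw [hUx]
    linarith

/-- **Lower bound for the flow through one gadget.** If `T` is an upper set of `x` within the
hyperedge `s`, then three times the flow from `T` dominates the difference of `x`-masses taken with
weights in `[0, 1]` whose total on each side of the cut is the splitting penalty. -/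
theorem exists_weights [DecidableEq V] (h : Balanced s x δ a b) (hs : s.Nonempty) (hδ : 0 < δ)
    (T : Finset V)
    (hlev : ∀ u ∈ s ∩ T, ∀ w ∈ s \ T, x w ≤ x u) :
    ∃ α : V → ℝ, (∀ v, 0 ≤ α v) ∧ (∀ v, α v ≤ 1) ∧
      ∑ v ∈ s ∩ T, α v = min (min ((s ∩ T).card : ℝ) ((s \ T).card : ℝ)) δ ∧
      ∑ v ∈ s \ T, α v = min (min ((s ∩ T).card : ℝ) ((s \ T).card : ℝ)) δ ∧
      ∑ v ∈ s ∩ T, α v * x v - ∑ v ∈ s \ T, α v * x v ≤ 3 * ∑ v ∈ s ∩ T, flow x a b v := by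
  set f := min (min ((s ∩ T).card : ℝ) ((s \ T).card : ℝ)) δ with hf
  have hab := h.le hs
  have hdisj : Disjoint (s ∩ T) (s \ T) :=
    Finset.disjoint_left.2 fun v h1 h2 => (Finset.mem_sdiff.1 h2).2 (Finset.mem_inter.1 h1).2
  have hun : s ∩ T ∪ s \ T = s := by
    rw [Finset.union_comm]; exact Finset.sdiff_union_inter s T
  have hf1 : f ≤ (s ∩ T).card := (min_le_left _ _).trans (min_le_left _ _)
  have hf2 : f ≤ (s \ T).card := (min_le_left _ _).trans (min_le_right _ _)
  have hf3 : f ≤ δ := min_le_right _ _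
  have htot := h.sum_flow_inter_add T
  have hf0 : 0 ≤ f := le_min (le_min (by positivity) (by positivity)) hδ.le
  rcases hf0.eq_or_lt with hf0 | hf0
  · refine ⟨fun _ => 0, fun _ => le_rfl, fun _ => zero_le_one, by rw [Finset.sum_const_zero, hf0],
      by rw [Finset.sum_const_zero, hf0], ?_⟩
    have hz : ∑ v ∈ s ∩ T, flow x a b v = 0 := by
      by_cases h1 : (s ∩ T) = ∅
      · rw [h1, Finset.sum_empty]
      by_cases h2 : (s \ T) = ∅
      · rw [h2, Finset.sum_empty] at htot; linarith
      have h1' : (0 : ℝ) < (s ∩ T).card := by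
        exact_mod_cast Finset.card_pos.2 (Finset.nonempty_iff_ne_empty.2 h1)
      have h2' : (0 : ℝ) < (s \ T).card := by
        exact_mod_cast Finset.card_pos.2 (Finset.nonempty_iff_ne_empty.2 h2)
      have : 0 < f := lt_min (lt_min h1' h2') hδ
      linarith
    simp [hz]
  by_cases hb : ∀ u ∈ s ∩ T, b ≤ x u
  · exact exists_weights_aux hdisj (by rwa [hun]) hab hlev hf0 hf1 hf2 hf3 hb
  · -- otherwise the lower part lies below `a`, and reversing the order gives the first case
    push Not at hb
    obtain ⟨u, hu, hub⟩ := hb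
    obtain ⟨α, h0, h1, hN, hP, hle⟩ := exists_weights_aux (x := fun v => -x v) (a := -b) (b := -a)
      hdisj.symm (by rw [Finset.union_comm, hun]; exact h.neg) (by linarith)
      (fun w hw u hu => neg_le_neg (hlev u hu w hw)) hf0 hf2 hf1 hf3
      (fun w hw => by have := hlev u hu w hw; linarith)
    refine ⟨α, h0, h1, hP, hN, ?_⟩
    simp only [flow_neg, mul_neg, Finset.sum_neg_distrib] at hle
    linarith

end

/-! ### Degrees, volumes and the flow through an upper set -/

section
variable {V E : Type*} [Fintype V] [Fintype E] [DecidableEq V] (e : E → Finset V) (δe : E → ℝ)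
  (hcard : ∀ ε, 2 ≤ (e ε).card) (hδe : ∀ ε, 1 ≤ δe ε)

include hcard hδe

omit [Fintype V] in
theorem hdeg_eq_card (v : V) :
    hdeg e δe v = ((univ.filter fun ε => v ∈ e ε).card : ℝ) := by
  unfold hdeg
  rw [Finset.card_eq_sum_ones, Nat.cast_sum]
  refine Finset.sum_congr rfl fun ε hε => ?_
  have hv := (Finset.mem_filter.1 hε).2
  unfold hsplit
  have h1 : e ε ∩ {v} = {v} := Finset.inter_singleton_of_mem hv
  have h2 : 1 ≤ (e ε \ {v}).card := by
    rw [Finset.sdiff_singleton_eq_erase, Finset.card_erase_of_mem hv]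
    have := hcard ε
    omega
  have h2' : (1 : ℝ) ≤ ((e ε \ {v}).card : ℝ) := by exact_mod_cast h2
  rw [h1, Finset.card_singleton, Nat.cast_one, min_eq_left h2', min_eq_left (hδe ε)]

theorem sum_edges (h : V → ℝ) : ∑ ε, ∑ v ∈ e ε, h v = ∑ v, hdeg e δe v * h v := by
  have h1 : ∀ ε, ∑ v ∈ e ε, h v = ∑ v, if v ∈ e ε then h v else 0 := fun ε => by
    rw [Finset.sum_ite_mem, Finset.univ_inter]
  simp_rw [h1]
  rw [Finset.sum_comm]
  refine Finset.sum_congr rfl fun v _ => ?_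
  rw [hdeg_eq_card e δe hcard hδe, ← Finset.sum_filter, Finset.sum_const, nsmul_eq_mul]

omit [Fintype V] in
theorem one_le_hdeg (hcov : ∀ v : V, ∃ ε, v ∈ e ε) (v : V) : 1 ≤ hdeg e δe v := by
  rw [hdeg_eq_card e δe hcard hδe]
  obtain ⟨ε, hε⟩ := hcov v
  exact_mod_cast Finset.card_pos.2 ⟨ε, Finset.mem_filter.2 ⟨Finset.mem_univ _, hε⟩⟩

omit [Fintype V] [Fintype E] hcard hδe in
theorem sum_inter_eq (ε : E) (T : Finset V) (F : V → ℝ) :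
    ∑ v ∈ e ε ∩ T, F v = ∑ v ∈ e ε, (if v ∈ T then 1 else 0) * F v := by
  simp only [ite_mul, one_mul, zero_mul]
  rw [Finset.sum_ite_mem]

variable {γ : ℝ} {s x : V → ℝ} {a b : E → ℝ}

omit hcard hδe in
theorem Stationary.sum_eq (h : Stationary e δe γ s x a b) (T : Finset V) :
    γ * (∑ v ∈ T, hdeg e δe v * s v - ∑ v ∈ T, hdeg e δe v * x v) =
      ∑ ε, ∑ v ∈ e ε ∩ T, flow x (a ε) (b ε) v := by
  have h1 := h.2 (fun v => if v ∈ T then 1 else 0)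
  simp_rw [sum_inter_eq]
  rw [← h1, ← Finset.sum_sub_distrib]
  congr 1
  rw [← Finset.univ_inter T, ← Finset.sum_ite_mem, Finset.univ_inter]
  refine Finset.sum_congr rfl fun v _ => ?_
  split_ifs <;> ring

theorem Stationary.le_of_le (hst : Stationary e δe γ s x a b) (hγ : 0 < γ)
    (hcov : ∀ v : V, ∃ ε, v ∈ e ε) {m : ℝ} (hs : ∀ v, s v ≤ m) (v : V) : x v ≤ m := by
  obtain ⟨u, -, hu⟩ := Finset.exists_max_image univ x ⟨v, Finset.mem_univ v⟩
  have h1 := hst.sum_eq e δe {u}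
  have h2 : 0 ≤ ∑ ε, ∑ w ∈ e ε ∩ {u}, flow x (a ε) (b ε) w := by
    refine Finset.sum_nonneg fun ε _ => Finset.sum_nonneg fun w hw => ?_
    obtain ⟨hw1, hw2⟩ := Finset.mem_inter.1 hw
    rw [Finset.mem_singleton] at hw2
    subst hw2
    exact (hst.1 ε).flow_nonneg_of_max hw1 fun v _ => hu v (Finset.mem_univ v)
  rw [← h1, Finset.sum_singleton, Finset.sum_singleton, ← mul_sub] at h2
  have hd := one_le_hdeg e δe hcard hδe hcov u
  have h3 : 0 ≤ s u - x u :=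
    nonneg_of_mul_nonneg_right (nonneg_of_mul_nonneg_right h2 hγ) (by linarith)
  linarith [hu v (Finset.mem_univ v), hs u]

theorem Stationary.nonneg (hst : Stationary e δe γ s x a b) (hγ : 0 < γ)
    (hcov : ∀ v : V, ∃ ε, v ∈ e ε) (hs : ∀ v, 0 ≤ s v) (v : V) : 0 ≤ x v := by
  obtain ⟨u, -, hu⟩ := Finset.exists_min_image univ x ⟨v, Finset.mem_univ v⟩
  have h1 := hst.sum_eq e δe {u}
  have h2 : ∑ ε, ∑ w ∈ e ε ∩ {u}, flow x (a ε) (b ε) w ≤ 0 := by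
    refine Finset.sum_nonpos fun ε _ => Finset.sum_nonpos fun w hw => ?_
    obtain ⟨hw1, hw2⟩ := Finset.mem_inter.1 hw
    rw [Finset.mem_singleton] at hw2
    subst hw2
    exact (hst.1 ε).flow_nonpos_of_min hw1 fun v _ => hu v (Finset.mem_univ v)
  rw [← h1, Finset.sum_singleton, Finset.sum_singleton, ← mul_sub] at h2
  have hd := one_le_hdeg e δe hcard hδe hcov u
  have h3 : 0 ≤ x u - s u := by
    by_contra hlt
    push Not at hlt
    have : 0 < γ * (hdeg e δe u * (s u - x u)) :=
      mul_pos hγ (mul_pos (by linarith) (by linarith))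
    linarith
  linarith [hu v (Finset.mem_univ v), hs u]

omit hcard hδe in
/-- The diffusion conserves the total mass of the seed. -/
theorem Stationary.total (hst : Stationary e δe γ s x a b) (hγ : 0 < γ) :
    ∑ v, hdeg e δe v * x v = ∑ v, hdeg e δe v * s v := by
  have h1 := hst.sum_eq e δe univ
  have h2 : ∑ ε, ∑ v ∈ e ε ∩ univ, flow x (a ε) (b ε) v = 0 :=
    Finset.sum_eq_zero fun ε _ => by rw [Finset.inter_univ, (hst.1 ε).sum_flow]
  rw [h2] at h1
  have := (mul_eq_zero.1 h1).resolve_left hγ.ne'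
  linarith

/-- The discrete second-difference inequality at an upper set `T`: mass `cut_H(T)` can be moved
into and out of `T` so that the resulting fractional sets `Wm ≤ T ≤ Wp` have volumes
`vol(T) ∓ cut_H(T)`. -/
theorem Stationary.second_difference (hst : Stationary e δe γ s x a b) (T : Finset V)
    (hT : ∀ u ∈ T, ∀ w, w ∉ T → x w ≤ x u) :
    ∃ Wm Wp : V → ℝ, (∀ v, 0 ≤ Wm v ∧ Wm v ≤ hdeg e δe v) ∧
      (∀ v, 0 ≤ Wp v ∧ Wp v ≤ hdeg e δe v) ∧
      ∑ v, Wm v = hvol e δe T - hcut e δe T ∧ ∑ v, Wp v = hvol e δe T + hcut e δe T ∧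
      2 * (∑ v ∈ T, hdeg e δe v * x v) - ∑ v, Wm v * x v - ∑ v, Wp v * x v ≤
        3 * γ * (∑ v ∈ T, hdeg e δe v * s v - ∑ v ∈ T, hdeg e δe v * x v) := by
  have hne : ∀ ε, (e ε).Nonempty := fun ε => Finset.card_pos.1 (by linarith [hcard ε])
  choose α hα0 hα1 hαT hαN hαle using fun ε => exists_weights (hst.1 ε) (hne ε)
    (by linarith [hδe ε]) T fun u hu w hw =>
      hT u (Finset.mem_inter.1 hu).2 w (Finset.mem_sdiff.1 hw).2
  -- total weight received by a vertex from the hyperedges containing it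
  set A : V → ℝ := fun v => ∑ ε ∈ univ.filter (fun ε => v ∈ e ε), α ε v with hA
  have hA0 : ∀ v, 0 ≤ A v := fun v => Finset.sum_nonneg fun ε _ => hα0 ε v
  have hA1 : ∀ v, A v ≤ hdeg e δe v := fun v => by
    rw [hdeg_eq_card e δe hcard hδe, ← mul_one ((Finset.card _ : ℕ) : ℝ), ← nsmul_eq_mul]
    exact Finset.sum_le_card_nsmul _ _ _ fun ε _ => hα1 ε v
  have hswap : ∀ (D : Finset V) (F : V → ℝ),
      ∑ v ∈ D, A v * F v = ∑ ε, ∑ v ∈ e ε ∩ D, α ε v * F v := by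
    intro D F
    simp_rw [hA, Finset.sum_mul, Finset.sum_filter]
    rw [Finset.sum_comm]
    refine Finset.sum_congr rfl fun ε _ => ?_
    rw [Finset.inter_comm, ← Finset.sum_ite_mem]
  have hsd : ∀ ε, e ε ∩ Tᶜ = e ε \ T := fun ε => by
    ext v; simp
  have hAT : ∑ v ∈ T, A v = hcut e δe T := by
    have := hswap T (fun _ => 1)
    simp only [mul_one] at this
    rw [this]
    exact Finset.sum_congr rfl fun ε _ => hαT ε
  have hAN : ∑ v ∈ Tᶜ, A v = hcut e δe T := by
    have := hswap Tᶜ (fun _ => 1)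
    simp only [mul_one] at this
    rw [this]
    exact Finset.sum_congr rfl fun ε _ => by rw [hsd, hαN ε]; rfl
  have hsum : ∑ v ∈ T, A v * x v - ∑ v ∈ Tᶜ, A v * x v ≤
      3 * ∑ ε, ∑ v ∈ e ε ∩ T, flow x (a ε) (b ε) v := by
    rw [hswap, hswap, ← Finset.sum_sub_distrib, Finset.mul_sum]
    exact Finset.sum_le_sum fun ε _ => by rw [hsd]; exact hαle ε
  have hdecomp : ∀ F G : V → ℝ, ∑ v, (if v ∈ T then F v else G v) =
      ∑ v ∈ T, F v + ∑ v ∈ Tᶜ, G v := fun F G => by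
    rw [← Finset.sum_add_sum_compl T]
    congr 1
    · exact Finset.sum_congr rfl fun v hv => if_pos hv
    · exact Finset.sum_congr rfl fun v hv => if_neg (Finset.mem_compl.1 hv)
  refine ⟨fun v => if v ∈ T then hdeg e δe v - A v else 0,
    fun v => if v ∈ T then hdeg e δe v else A v, fun v => ?_, fun v => ?_, ?_, ?_, ?_⟩
  · dsimp only
    have := hA0 v
    have := hA1 v
    split_ifs <;> constructor <;> linarith
  · dsimp only
    have := hA0 v
    have := hA1 v
    split_ifs <;> constructor <;> linarith
  · rw [hdecomp, Finset.sum_sub_distrib, hAT, Finset.sum_const_zero, add_zero]; rfl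
  · rw [hdecomp, hAN]; rfl
  · simp only [ite_mul, zero_mul]
    rw [hdecomp, hdecomp, Finset.sum_const_zero, mul_assoc, hst.sum_eq e δe T]
    simp only [sub_mul]
    rw [Finset.sum_sub_distrib]
    linarith

/-- A diffusion seeded at `S` leaks at most mass `cut S / (γ * vol S)` out of `S`. -/
theorem Stationary.leak_le
    {S : Finset V} (hst : Stationary e δe γ (fun v => (if v ∈ S then 1 else 0) / hvol e δe S) x a b)
    (hγ : 0 < γ) (hcov : ∀ v : V, ∃ ε, v ∈ e ε) (hS : 0 < hvol e δe S) :
    γ * ∑ v ∈ Sᶜ, hdeg e δe v * x v ≤ hcut e δe S / hvol e δe S := by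
  have hs0 : ∀ v : V, 0 ≤ (if v ∈ S then (1 : ℝ) else 0) / hvol e δe S := fun v => by
    split_ifs <;> positivity
  have hs1 : ∀ v : V, (if v ∈ S then (1 : ℝ) else 0) / hvol e δe S ≤ 1 / hvol e δe S := fun v => by
    gcongr
    split_ifs <;> norm_num
  have hx0 := hst.nonneg e δe hcard hδe hγ hcov hs0
  have hx1 := hst.le_of_le e δe hcard hδe hγ hcov hs1
  have hne : ∀ ε, (e ε).Nonempty := fun ε => Finset.card_pos.1 (by linarith [hcard ε])
  have h1 := hst.sum_eq e δe S
  have h2 := hst.total e δe hγ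
  have h3 : ∑ v ∈ Sᶜ, hdeg e δe v * ((if v ∈ S then 1 else 0) / hvol e δe S) = 0 :=
    Finset.sum_eq_zero fun v hv => by rw [if_neg (Finset.mem_compl.1 hv)]; simp
  rw [← Finset.sum_add_sum_compl S, ← Finset.sum_add_sum_compl S, h3] at h2
  have h4 : ∑ v ∈ Sᶜ, hdeg e δe v * x v =
      ∑ v ∈ S, hdeg e δe v * ((if v ∈ S then 1 else 0) / hvol e δe S)
        - ∑ v ∈ S, hdeg e δe v * x v := by linarith
  rw [h4, h1, div_eq_inv_mul, hcut, Finset.mul_sum, ← one_div]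
  exact Finset.sum_le_sum fun ε _ => (hst.1 ε).sum_flow_le (hne ε) (by linarith [hδe ε])
    (fun v _ => hx0 v) (fun v _ => hx1 v) S

end


/-! ### The concave barrier -/

/-- If a concave function dominates the mass of every strict upper set of `x` as a function of
its volume, then it dominates the mass of every fractional set: the heaviest fractional
set of a given volume interpolates between two consecutive superlevel sets. -/
theorem fractional_le {V : Type*} [Fintype V] [DecidableEq V] [Nonempty V] (d x : V → ℝ)
    (hd : ∀ v, 0 ≤ d v) (B : ℝ → ℝ) (hB : ConcaveOn ℝ (Set.Icc 0 (∑ v, d v)) B) (m : ℝ)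
    (hT : ∀ T : Finset V, (∀ u ∈ T, ∀ w, w ∉ T → x w < x u) →
      ∑ v ∈ T, d v * x v ≤ B (∑ v ∈ T, d v) + m)
    (W : V → ℝ) (hW : ∀ v, 0 ≤ W v ∧ W v ≤ d v) :
    ∑ v, W v * x v ≤ B (∑ v, W v) + m := by
  set k := ∑ v, W v with hk
  have hk0 : 0 ≤ k := Finset.sum_nonneg fun v _ => (hW v).1
  have hkM : k ≤ ∑ v, d v := Finset.sum_le_sum fun v _ => (hW v).2
  set F := univ.filter (fun u => k ≤ ∑ v ∈ univ.filter (fun v => x u ≤ x v), d v) with hF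
  have hFne : F.Nonempty := by
    obtain ⟨u, -, hu⟩ := Finset.exists_min_image univ x Finset.univ_nonempty
    refine ⟨u, Finset.mem_filter.2 ⟨Finset.mem_univ _, ?_⟩⟩
    rwa [Finset.filter_true_of_mem fun v hv => hu v hv]
  obtain ⟨u0, hu0F, hu0⟩ := Finset.exists_max_image F x hFne
  set τ := x u0 with hτ
  set T1 := univ.filter (fun v => τ < x v) with hT1
  set T2 := univ.filter (fun v => τ ≤ x v) with hT2
  have hk2 : k ≤ ∑ v ∈ T2, d v := (Finset.mem_filter.1 hu0F).2
  have hk1 : ∑ v ∈ T1, d v ≤ k := by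
    by_contra hlt
    push Not at hlt
    have hne : T1.Nonempty := by
      rw [Finset.nonempty_iff_ne_empty]
      intro h0
      rw [h0, Finset.sum_empty] at hlt
      linarith
    obtain ⟨u1, hu1, hmin⟩ := Finset.exists_min_image T1 x hne
    have hmem : u1 ∈ F := by
      refine Finset.mem_filter.2 ⟨Finset.mem_univ _, hlt.le.trans ?_⟩
      exact Finset.sum_le_sum_of_subset_of_nonneg
        (fun v hv => Finset.mem_filter.2 ⟨Finset.mem_univ _, hmin v hv⟩) fun v _ _ => hd v
    have := (Finset.mem_filter.1 hu1).2
    linarith [hu0 u1 hmem]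
  have hup1 := hT T1 fun u hu w hw => by
    have h1 := (Finset.mem_filter.1 hu).2
    have h2 : ¬ τ < x w := fun h => hw (Finset.mem_filter.2 ⟨Finset.mem_univ _, h⟩)
    linarith
  have hup2 := hT T2 fun u hu w hw => by
    have h1 := (Finset.mem_filter.1 hu).2
    have h2 : ¬ τ ≤ x w := fun h => hw (Finset.mem_filter.2 ⟨Finset.mem_univ _, h⟩)
    linarith
  -- exchange argument against the threshold `τ`
  have hWx : ∑ v, W v * (x v - τ) ≤ ∑ v ∈ T1, d v * (x v - τ) := by
    rw [hT1, Finset.sum_filter]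
    refine Finset.sum_le_sum fun v _ => ?_
    split_ifs with h
    · exact mul_le_mul_of_nonneg_right (hW v).2 (by linarith)
    · exact mul_nonpos_of_nonneg_of_nonpos (hW v).1 (by linarith)
  have hT12 : ∑ v ∈ T2, d v * (x v - τ) = ∑ v ∈ T1, d v * (x v - τ) := by
    symm
    refine Finset.sum_subset (fun v hv => ?_) fun v hv hv' => ?_
    · exact Finset.mem_filter.2 ⟨Finset.mem_univ _, (Finset.mem_filter.1 hv).2.le⟩
    · have h1 := (Finset.mem_filter.1 hv).2
      have h2 : ¬ τ < x v := fun h => hv' (Finset.mem_filter.2 ⟨Finset.mem_univ _, h⟩)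
      rw [show x v = τ by linarith, sub_self, mul_zero]
  simp only [mul_sub, Finset.sum_sub_distrib, ← Finset.sum_mul] at hWx hT12
  rw [← hk] at hWx
  set v1 := ∑ v ∈ T1, d v with hv1
  set v2 := ∑ v ∈ T2, d v with hv2
  have hv10 : 0 ≤ v1 := Finset.sum_nonneg fun v _ => hd v
  have hv2M : v2 ≤ ∑ v, d v :=
    Finset.sum_le_sum_of_subset_of_nonneg (Finset.subset_univ _) fun v _ _ => hd v
  rcases (hk1.trans hk2).eq_or_lt with h12 | h12
  · have : k = v1 := by linarith
    rw [this] at hWx ⊢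
    linarith
  · obtain ⟨l, hl⟩ : ∃ l, l = (k - v1) / (v2 - v1) := ⟨_, rfl⟩
    have hpos : 0 < v2 - v1 := by linarith
    have hl0 : 0 ≤ l := by rw [hl]; exact div_nonneg (by linarith) hpos.le
    have hl1 : l ≤ 1 := by rw [hl]; exact (div_le_one hpos).2 (by linarith)
    have hlk : l * (v2 - v1) = k - v1 := by rw [hl]; field_simp
    have hconc := hB.2 (x := v1) (y := v2) ⟨hv10, by linarith⟩ ⟨by linarith, hv2M⟩
      (show 0 ≤ 1 - l by linarith) hl0 (by ring)
    simp only [smul_eq_mul] at hconc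
    rw [show (1 - l) * v1 + l * v2 = k by linarith] at hconc
    have h1 := mul_le_mul_of_nonneg_left hup1 (show 0 ≤ 1 - l by linarith)
    have h2 := mul_le_mul_of_nonneg_left hup2 hl0
    have h3 : l * (∑ v ∈ T2, d v * x v) =
        l * (∑ v ∈ T1, d v * x v) + τ * (k - v1) := by
      rw [← hlk]
      have : ∑ v ∈ T2, d v * x v = ∑ v ∈ T1, d v * x v + τ * (v2 - v1) := by linarith
      rw [this]; ring
    linarith

/-- The barrier: an upper bound for the mass of a set of volume `k`. Here `M` is the total volume,
`d` the degree of the seed and `D` a small coefficient; the logarithm grows in the scale-invariant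
variable `min k (M - k) / d`. -/
noncomputable def barrier (M d D k : ℝ) : ℝ :=
  1 / 20 + k / M + D * Real.log (1 + 99 / d * min k (M - k))

theorem barrier_concave {M d D : ℝ} (hd : 0 < d) (hD : 0 ≤ D) :
    ConcaveOn ℝ (Set.Icc 0 M) (barrier M d D) := by
  refine ⟨convex_Icc _ _, fun p hp q hq α β hα hβ hαβ => ?_⟩
  simp only [smul_eq_mul]
  have hq0 : 0 < 99 / d := by positivity
  have hpos : ∀ k ∈ Set.Icc 0 M, 0 < 1 + 99 / d * min k (M - k) := fun k hk => by
    have : 0 ≤ min k (M - k) := le_min hk.1 (by linarith [hk.2])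
    positivity
  have hlog := strictConcaveOn_log_Ioi.concaveOn.2 (Set.mem_Ioi.2 (hpos p hp))
    (Set.mem_Ioi.2 (hpos q hq)) hα hβ hαβ
  simp only [smul_eq_mul] at hlog
  have hmin : α * min p (M - p) + β * min q (M - q) ≤
      min (α * p + β * q) (M - (α * p + β * q)) := by
    refine le_min ?_ ?_
    · exact add_le_add (mul_le_mul_of_nonneg_left (min_le_left _ _) hα)
        (mul_le_mul_of_nonneg_left (min_le_left _ _) hβ)
    · have h1 := mul_le_mul_of_nonneg_left (min_le_right p (M - p)) hα
      have h2 := mul_le_mul_of_nonneg_left (min_le_right q (M - q)) hβ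
      have h3 : α * M + β * M = M := by rw [← add_mul, hαβ, one_mul]
      linarith
  have hcomb : α * (1 + 99 / d * min p (M - p)) + β * (1 + 99 / d * min q (M - q)) ≤
      1 + 99 / d * min (α * p + β * q) (M - (α * p + β * q)) := by
    have := mul_le_mul_of_nonneg_left hmin hq0.le
    linarith
  have hcpos : 0 < α * (1 + 99 / d * min p (M - p)) + β * (1 + 99 / d * min q (M - q)) := by
    have h1 := hpos p hp
    have h2 := hpos q hq
    rcases hα.eq_or_lt with h0 | h0
    · have : β = 1 := by linarith
      rw [← h0, this]; linarith
    · have := mul_pos h0 h1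
      have := mul_nonneg hβ h2.le
      linarith
  have hfin := mul_le_mul_of_nonneg_left (hlog.trans (Real.log_le_log hcpos hcomb)) hD
  unfold barrier
  have h4 : (α * p + β * q) / M = α * (p / M) + β * (q / M) := by ring
  rw [h4]
  linarith

theorem log_step {q t C : ℝ} (hq : 0 < q) (hC0 : 0 ≤ C) (hCt : C ≤ t) :
    Real.log (1 + q * (t - C)) + Real.log (1 + q * (t + C)) ≤
      2 * Real.log (1 + q * t) - (q * C / (1 + q * t)) ^ 2 := by
  have h1 : 0 < 1 + q * (t - C) := by
    have := mul_nonneg hq.le (show 0 ≤ t - C by linarith); linarith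
  have h2 : 0 < 1 + q * (t + C) := by
    have := mul_nonneg hq.le (show 0 ≤ t + C by linarith); linarith
  have h3 : 0 < 1 + q * t := by
    have := mul_nonneg hq.le (show 0 ≤ t by linarith); linarith
  have h4 := Real.log_le_sub_one_of_pos (div_pos (mul_pos h1 h2) (pow_pos h3 2))
  rw [Real.log_div (mul_pos h1 h2).ne' (pow_pos h3 2).ne', Real.log_mul h1.ne' h2.ne',
    Real.log_pow] at h4
  have h5 : (1 + q * (t - C)) * (1 + q * (t + C)) / (1 + q * t) ^ 2 - 1 =
      - (q * C / (1 + q * t)) ^ 2 := by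
    field_simp; ring
  rw [h5] at h4
  push_cast at h4
  linarith

/-- The barrier is a strict supersolution of the second-difference inequality away from the ends
of `[0, M]`. -/
theorem barrier_step {M d γ κ L k C : ℝ} (hd : 0 < d) (hγ : 0 < γ) (hL : 0 < L)
    (hκ0 : 0 ≤ κ) (hκ : κ ^ 2 = 32 * γ * L) (hkd : d / 20 ≤ min k (M - k))
    (hC1 : κ * min k (M - k) ≤ C) (hC2 : C ≤ min k (M - k)) :
    barrier M d (19 / 100 / L) (k - C) + barrier M d (19 / 100 / L) (k + C) + 57 / 20 * γ <
      2 * barrier M d (19 / 100 / L) k := by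
  obtain ⟨t, ht⟩ : ∃ t, t = min k (M - k) := ⟨_, rfl⟩
  obtain ⟨q, hq⟩ : ∃ q, q = 99 / d := ⟨_, rfl⟩
  obtain ⟨D, hD⟩ : ∃ D, D = 19 / 100 / L := ⟨_, rfl⟩
  unfold barrier
  rw [← ht] at hkd hC1 hC2 ⊢
  rw [← hq, ← hD]
  have hq0 : 0 < q := by rw [hq]; positivity
  have hD0 : 0 < D := by rw [hD]; positivity
  have ht0 : 0 < t := by linarith
  have hC0 : 0 ≤ C := le_trans (by positivity) hC1
  have hk1 : t ≤ k := by rw [ht]; exact min_le_left _ _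
  have hk2 : t ≤ M - k := by rw [ht]; exact min_le_right _ _
  have hmono : ∀ r r' : ℝ, 0 ≤ r → r ≤ r' → Real.log (1 + q * r) ≤ Real.log (1 + q * r') :=
    fun r r' h0 h1 => Real.log_le_log (by positivity)
      (by linarith [mul_le_mul_of_nonneg_left h1 hq0.le])
  have hlogs : Real.log (1 + q * min (k - C) (M - (k - C))) +
      Real.log (1 + q * min (k + C) (M - (k + C))) ≤
      Real.log (1 + q * (t - C)) + Real.log (1 + q * (t + C)) := by
    have hm1 : 0 ≤ min (k - C) (M - (k - C)) := le_min (by linarith) (by linarith)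
    have hm2 : 0 ≤ min (k + C) (M - (k + C)) := le_min (by linarith) (by linarith)
    rcases min_choice k (M - k) with h | h
    · exact add_le_add (hmono _ _ hm1 ((min_le_left _ _).trans (by linarith)))
        (hmono _ _ hm2 ((min_le_left _ _).trans (by linarith)))
    · rw [add_comm (Real.log (1 + q * (t - C)))]
      exact add_le_add (hmono _ _ hm1 ((min_le_right _ _).trans (by linarith)))
        (hmono _ _ hm2 ((min_le_right _ _).trans (by linarith)))
  have hstep := log_step hq0 hC0 hC2
  -- since `q t ≥ 99 / 20`, the ratio `q t / (1 + q t)` is at least `99 / 119 > 83 / 100`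
  have hqt : 99 / 20 ≤ q * t := by
    have := mul_le_mul_of_nonneg_left hkd hq0.le
    have h1 : q * (d / 20) = 99 / 20 := by rw [hq]; field_simp
    linarith
  have hratio : 83 / 100 * κ ≤ q * C / (1 + q * t) := by
    rw [le_div_iff₀ (by linarith)]
    have h1 := mul_le_mul_of_nonneg_left hC1 hq0.le
    have h2 := mul_nonneg hκ0 (show 0 ≤ q * t - 83 / 100 * (1 + q * t) by linarith)
    linarith
  have hsq : (83 / 100 * κ) ^ 2 ≤ (q * C / (1 + q * t)) ^ 2 :=
    pow_le_pow_left₀ (by positivity) hratio 2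
  have hDκ : D * (83 / 100 * κ) ^ 2 = 19 / 100 * (83 / 100) ^ 2 * 32 * γ := by
    rw [mul_pow, hκ, hD]; field_simp
  have h1 := mul_le_mul_of_nonneg_left hsq hD0.le
  have h2 := mul_le_mul_of_nonneg_left (hlogs.trans hstep) hD0.le
  have h3 : (k - C) / M + (k + C) / M = 2 * (k / M) := by ring
  have h4 : 57 / 20 * γ < 19 / 100 * (83 / 100) ^ 2 * 32 * γ := by
    apply mul_lt_mul_of_pos_right _ hγ; norm_num
  linarith

/-! ### Mass bound under a conductance lower bound, and the sweep -/

section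
variable {V E : Type*} [Fintype V] [Fintype E] [DecidableEq V] (e : E → Finset V) (δe : E → ℝ)
  (hcard : ∀ ε, 2 ≤ (e ε).card) (hδe : ∀ ε, 1 ≤ δe ε) (hcov : ∀ v : V, ∃ ε, v ∈ e ε)

include hcard hδe hcov

/-- If every superlevel set of a diffusion seeded at `v ∈ S` has conductance at least `κ`, then less
than `3 / 4` of its mass lies in `S`. -/
theorem mass_lt {γ κ : ℝ} {x : V → ℝ} {a b : E → ℝ} {v : V} {S : Finset V} (hγ : 0 < γ)
    (hst : Stationary e δe γ (fun u => (if u ∈ ({v} : Finset V) then 1 else 0) / hvol e δe {v})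
      x a b)
    (hv : v ∈ S) (hS : hvol e δe S ≤ hM e δe / 2)
    (hκ0 : 0 ≤ κ) (hκ : κ ^ 2 = 32 * γ * Real.log (100 * hvol e δe S / hdeg e δe v))
    (hcutT : ∀ T : Finset V, (∀ u ∈ T, ∀ w, w ∉ T → x w < x u) → 0 < hvol e δe T →
      hvol e δe T < hM e δe →
      κ * min (hvol e δe T) (hM e δe - hvol e δe T) ≤ hcut e δe T) :
    ∑ u ∈ S, hdeg e δe u * x u < 3 / 4 := by
  classical
  have : Nonempty V := ⟨v⟩
  have hd1 := one_le_hdeg e δe hcard hδe hcov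
  have hd0 : ∀ u, 0 ≤ hdeg e δe u := fun u => by linarith [hd1 u]
  set d := hdeg e δe v with hd
  have hdpos : 0 < d := by linarith [hd1 v]
  have hvolv : hvol e δe {v} = d := Finset.sum_singleton _ _
  rw [hvolv] at hst
  set s : V → ℝ := fun u => (if u ∈ ({v} : Finset V) then 1 else 0) / d with hs
  have hs0 : ∀ u, 0 ≤ s u := fun u => by simp only [hs]; split_ifs <;> positivity
  have hs1 : ∀ u, s u ≤ 1 / d := fun u => by
    simp only [hs]; gcongr; split_ifs <;> norm_num
  have hx0 := hst.nonneg e δe hcard hδe hγ hcov hs0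
  have hx1 := hst.le_of_le e δe hcard hδe hγ hcov hs1
  have hstot : ∑ u, hdeg e δe u * s u = 1 := by
    rw [Finset.sum_eq_single v]
    · simp only [hs, Finset.mem_singleton, if_true]; field_simp
      exact hd.symm
    · intro u _ hu
      simp [hs, hu]
    · exact fun h => absurd (Finset.mem_univ v) h
  have htot : ∑ u, hdeg e δe u * x u = 1 := (hst.total e δe hγ).trans hstot
  have hsT : ∀ T : Finset V, ∑ u ∈ T, hdeg e δe u * s u ≤ 1 := fun T => by
    rw [← hstot]
    exact Finset.sum_le_sum_of_subset_of_nonneg (Finset.subset_univ _)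
      fun u _ _ => mul_nonneg (hd0 u) (hs0 u)
  have hxT : ∀ T : Finset V, ∑ u ∈ T, hdeg e δe u * x u ≤ 1 := fun T => by
    rw [← htot]
    exact Finset.sum_le_sum_of_subset_of_nonneg (Finset.subset_univ _)
      fun u _ _ => mul_nonneg (hd0 u) (hx0 u)
  have hxd : ∀ T : Finset V, ∑ u ∈ T, hdeg e δe u * x u ≤ hvol e δe T / d := fun T => by
    rw [hvol, Finset.sum_div]
    refine Finset.sum_le_sum fun u _ => ?_
    rw [div_eq_mul_one_div]
    exact mul_le_mul_of_nonneg_left (hx1 u) (hd0 u)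
  have hvol0 : ∀ T : Finset V, 0 ≤ hvol e δe T := fun T => Finset.sum_nonneg fun u _ => hd0 u
  have hvolM : ∀ T : Finset V, hvol e δe T ≤ hM e δe := fun T =>
    Finset.sum_le_sum_of_subset_of_nonneg (Finset.subset_univ _) fun u _ _ => hd0 u
  set M := hM e δe with hM'
  set K := hvol e δe S with hK
  have hdK : d ≤ K := Finset.single_le_sum (f := fun u => hdeg e δe u) (fun u _ => hd0 u) hv
  have hMpos : 0 < M := by linarith
  set L := Real.log (100 * K / d) with hL
  have hR : 100 ≤ 100 * K / d := by
    rw [le_div_iff₀ hdpos]; linarith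
  have hLpos : 0 < L := Real.log_pos (by linarith)
  set B := barrier M d (19 / 100 / L) with hB
  have hDpos : 0 < 19 / 100 / L := by positivity
  have hBconc : ConcaveOn ℝ (Set.Icc 0 (∑ u, hdeg e δe u)) B := barrier_concave hdpos hDpos.le
  have hBlow : ∀ k, 0 ≤ k → k ≤ M → 1 / 20 + k / M ≤ B k := by
    intro k h0 h1
    have h2 : 0 ≤ min k (M - k) := le_min h0 (by linarith)
    have h3 : 0 ≤ Real.log (1 + 99 / d * min k (M - k)) :=
      Real.log_nonneg (by linarith [mul_nonneg (show 0 ≤ 99 / d by positivity) h2])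
    have := mul_nonneg hDpos.le h3
    simp only [hB, barrier]
    linarith
  -- the maximal excess of mass over the barrier is attained at some strict upper set
  set 𝒰 := (univ : Finset (Finset V)).filter (fun T => ∀ u ∈ T, ∀ w, w ∉ T → x w < x u) with hU
  have hUne : 𝒰.Nonempty := ⟨∅, Finset.mem_filter.2 ⟨Finset.mem_univ _, by simp⟩⟩
  obtain ⟨T, hTU, hTmax⟩ := Finset.exists_max_image 𝒰
    (fun T => ∑ u ∈ T, hdeg e δe u * x u - B (hvol e δe T)) hUne
  have hTup := (Finset.mem_filter.1 hTU).2
  set m := ∑ u ∈ T, hdeg e δe u * x u - B (hvol e δe T) with hm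
  have hall : ∀ T' : Finset V, (∀ u ∈ T', ∀ w, w ∉ T' → x w < x u) →
      ∑ u ∈ T', hdeg e δe u * x u ≤ B (hvol e δe T') + m := fun T' hT' => by
    have := hTmax T' (Finset.mem_filter.2 ⟨Finset.mem_univ _, hT'⟩)
    linarith
  have hfrac := fractional_le (hdeg e δe) x hd0 B hBconc m hall
  have hm0 : m ≤ 0 := by
    by_contra hpos
    push Not at hpos
    set k := hvol e δe T with hk
    -- near the ends of `[0, M]` the trivial bounds on the mass suffice
    have hkd : d / 20 ≤ min k (M - k) := by
      by_contra hlt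
      push Not at hlt
      have h1 := hBlow k (hvol0 T) (hvolM T)
      rcases min_lt_iff.1 hlt with h2 | h2
      · have h3 : k / d < 1 / 20 := by rw [div_lt_iff₀ hdpos]; linarith
        have h4 : 0 ≤ k / M := div_nonneg (hvol0 T) hMpos.le
        linarith [hxd T]
      · have h3 : 1 - 1 / 20 ≤ k / M := by rw [le_div_iff₀ hMpos]; linarith
        linarith [hxT T]
    have hk1 : 0 < k := by linarith [min_le_left k (M - k)]
    have hk2 : k < M := by linarith [min_le_right k (M - k)]
    obtain ⟨Wm, Wp, hWm, hWp, hWms, hWps, hdiff⟩ :=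
      hst.second_difference e δe hcard hδe T fun u hu w hw => (hTup u hu w hw).le
    have hC1 := hcutT T hTup hk1 hk2
    have hC2 : hcut e δe T ≤ min k (M - k) := by
      refine le_min ?_ ?_
      · have : 0 ≤ ∑ u, Wm u := Finset.sum_nonneg fun u _ => (hWm u).1
        linarith
      · have : ∑ u, Wp u ≤ M := Finset.sum_le_sum fun u _ => (hWp u).2
        linarith
    have hstep := barrier_step hdpos hγ hLpos hκ0 hκ hkd hC1 hC2
    have h1 := hfrac Wm hWm
    have h2 := hfrac Wp hWp
    rw [hWms] at h1
    rw [hWps] at h2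
    have h3 : ∑ u ∈ T, hdeg e δe u * x u = B k + m := by rw [hm]; ring
    have h4 := hBlow k (hvol0 T) (hvolM T)
    have h5 : 0 ≤ k / M := div_nonneg (hvol0 T) hMpos.le
    have h6 : 3 * γ * (∑ u ∈ T, hdeg e δe u * s u - ∑ u ∈ T, hdeg e δe u * x u) ≤
        3 * γ * (19 / 20) :=
      mul_le_mul_of_nonneg_left (by linarith [hsT T]) (by linarith)
    linarith
  have hSfrac := hfrac (fun u => if u ∈ S then hdeg e δe u else 0) fun u => by
    split_ifs
    · exact ⟨hd0 u, le_rfl⟩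
    · exact ⟨le_rfl, hd0 u⟩
  simp only [ite_mul, zero_mul, Finset.sum_ite_mem, Finset.univ_inter] at hSfrac
  have hBK : B K ≤ 1 / 20 + 1 / 2 + 19 / 100 := by
    have h1 : K / M ≤ 1 / 2 := by rw [div_le_iff₀ hMpos]; linarith
    have h2 : Real.log (1 + 99 / d * min K (M - K)) ≤ L := by
      refine Real.log_le_log ?_ ?_
      · have : 0 ≤ min K (M - K) := le_min (hvol0 S) (by linarith)
        positivity
      · have h3 := mul_le_mul_of_nonneg_left (min_le_left K (M - K))
          (show 0 ≤ 99 / d by positivity)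
        have h4 : 1 ≤ K / d := by rw [le_div_iff₀ hdpos]; linarith
        have h5 : 100 * K / d = 99 / d * K + K / d := by ring
        linarith
    have h3 := mul_le_mul_of_nonneg_left h2 hDpos.le
    have h4 : 19 / 100 / L * L = 19 / 100 := by field_simp
    simp only [hB, barrier]
    linarith
  have : ∑ u ∈ S, hdeg e δe u = K := rfl
  rw [this] at hSfrac
  linarith

end

/-- A strict upper set of `x` is the sweep set of its cardinality, for every decreasing
enumeration. -/
theorem exists_sweepSet_eq {V : Type*} [DecidableEq V] {n : ℕ} {x : V → ℝ} (σ : Fin n ≃ V)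
    (hσ : ∀ i j : Fin n, i ≤ j → x (σ j) ≤ x (σ i)) (T : Finset V)
    (hT : ∀ u ∈ T, ∀ w, w ∉ T → x w < x u) : ∃ j ≤ n, sweepSet σ j = T := by
  classical
  set I := univ.filter (fun i : Fin n => σ i ∈ T) with hI
  have hlow : ∀ i j : Fin n, i ≤ j → σ j ∈ T → σ i ∈ T := by
    intro i j hij hj
    by_contra hi
    linarith [hσ i j hij, hT _ hj _ hi]
  by_cases hfull : ∀ i, σ i ∈ T
  · refine ⟨n, le_rfl, ?_⟩
    ext u
    simp only [sweepSet, Finset.mem_image, Finset.mem_filter, Finset.mem_univ, true_and]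
    constructor
    · rintro ⟨i, -, rfl⟩; exact hfull i
    · intro _; exact ⟨σ.symm u, (σ.symm u).2, σ.apply_symm_apply u⟩
  · push Not at hfull
    set J := univ.filter (fun i : Fin n => σ i ∉ T) with hJ
    have hJne : J.Nonempty := by
      obtain ⟨i, hi⟩ := hfull
      exact ⟨i, Finset.mem_filter.2 ⟨Finset.mem_univ _, hi⟩⟩
    obtain ⟨i0, hi0, hmin⟩ := Finset.exists_min_image J (fun i => i) hJne
    refine ⟨i0, i0.2.le, ?_⟩
    ext u
    simp only [sweepSet, Finset.mem_image, Finset.mem_filter, Finset.mem_univ, true_and]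
    constructor
    · rintro ⟨i, hi, rfl⟩
      by_contra hiT
      have h1 := hmin i (Finset.mem_filter.2 ⟨Finset.mem_univ _, hiT⟩)
      exact absurd (Fin.le_def.1 h1) (by omega)
    · intro hu
      refine ⟨σ.symm u, ?_, σ.apply_symm_apply u⟩
      by_contra hge
      push Not at hge
      exact (Finset.mem_filter.1 hi0).2
        (hlow i0 (σ.symm u) (Fin.le_def.2 hge) (by rwa [σ.apply_symm_apply]))

theorem hcut_eq_zero_of_hbdry_empty {V E : Type*} [Fintype E] [DecidableEq V]
    (e : E → Finset V) (δe : E → ℝ) (hδe : ∀ ε, 1 ≤ δe ε) (T : Finset V)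
    (h : hbdry e T = ∅) : hcut e δe T = 0 := by
  refine Finset.sum_eq_zero fun ε _ => ?_
  have hε : ε ∉ hbdry e T := by rw [h]; exact Set.notMem_empty _
  have hδ : (0 : ℝ) ≤ δe ε := by linarith [hδe ε]
  unfold hsplit
  by_cases h1 : (e ε ∩ T).Nonempty
  · have h2 : e ε \ T = ∅ := Finset.not_nonempty_iff_eq_empty.1 fun h2 => hε ⟨h1, h2⟩
    rw [h2, Finset.card_empty, Nat.cast_zero, min_eq_right (Nat.cast_nonneg _), min_eq_left hδ]
  · rw [Finset.not_nonempty_iff_eq_empty.1 h1, Finset.card_empty, Nat.cast_zero,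
      min_eq_left (Nat.cast_nonneg _), min_eq_left hδ]

theorem one_le_deltaBar {V E : Type*} [Finite E] [DecidableEq V]
    (e : E → Finset V) (δe : E → ℝ) (hcard : ∀ ε, 2 ≤ (e ε).card) (hδe : ∀ ε, 1 ≤ δe ε)
    (T : Finset V) (h : (hbdry e T).Nonempty) : 1 ≤ deltaBar e δe T := by
  obtain ⟨ε, hε⟩ := h
  have h1 : (1 : ℝ) ≤ min (δe ε) (((e ε).card : ℝ) / 2) := by
    refine le_min (hδe ε) ?_
    have : (2 : ℝ) ≤ (e ε).card := by exact_mod_cast hcard ε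
    linarith
  exact h1.trans (le_csSup ((Set.toFinite _).image _).bddAbove ⟨ε, hε, rfl⟩)

end HCheeger


open Finset in
open scoped Classical in
/-- Cheeger-type guarantee for localized hypergraph quadratic diffusions
(Theorem `thm:cond`): if `vol(S*) ≤ M/2`, `φ(S*) ≤ γ/(8c)`, and the seed `v` is drawn
from a distribution `μ` supported on `S*` satisfying the good-sampling condition, then
with probability at least `1/2`, every sweep cut over `x(γ,{v})` (for any decreasing
ordering of its values, and any conductance-minimizing sweep set `S_x` it returns)
satisfies `φ(S_x) ≤ δ̄ sqrt(32 γ ln(100 vol(S*)/d_v))` where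
`δ̄ = max_{e∈∂S_x} min{δ_e, |e|/2}`. -/
theorem hypergraph_cheeger_guarantee {V E : Type*} [Fintype V] [Fintype E]
    [DecidableEq V]
    (e : E → Finset V) (δe : E → ℝ)
    (hcard : ∀ ε, 2 ≤ (e ε).card) (hδe : ∀ ε, 1 ≤ δe ε)
    (hcov : ∀ v : V, ∃ ε, v ∈ e ε)
    (γ c : ℝ) (hγ : 0 < γ) (hc : 0 < c)
    (S : Finset V) (hS0 : 0 < hvol e δe S) (hS2 : hvol e δe S ≤ hM e δe / 2)
    (hφS : hcond e δe S ≤ γ / (8 * c))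
    (μ : V → ℝ) (hμ0 : ∀ v, 0 ≤ μ v) (hμsupp : ∀ v, v ∉ S → μ v = 0)
    (hμ1 : ∑ v : V, μ v = 1)
    (xseed : V → V → ℝ)
    (hxseed : ∀ v ∈ S, ∀ y : V → ℝ,
      Qobj e δe γ {v} (xseed v) ≤ Qobj e δe γ {v} y)
    (xS : V → ℝ) (hxS : ∀ y : V → ℝ, Qobj e δe γ S xS ≤ Qobj e δe γ S y)
    (hexp : ∑ v : V, μ v * (∑ u ∈ Sᶜ, hdeg e δe u * xseed v u) ≤
      c * ∑ u ∈ Sᶜ, hdeg e δe u * xS u) :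
    (1 : ℝ) / 2 ≤ ∑ v ∈ univ.filter (fun v : V =>
      ∀ σ : Fin (Fintype.card V) ≃ V,
        (∀ i j : Fin (Fintype.card V), i ≤ j → xseed v (σ j) ≤ xseed v (σ i)) →
        ∀ j : ℕ, j ≤ Fintype.card V →
          0 < hvol e δe (sweepSet σ j) → hvol e δe (sweepSet σ j) < hM e δe →
          (∀ j' : ℕ, j' ≤ Fintype.card V → 0 < hvol e δe (sweepSet σ j') →
            hvol e δe (sweepSet σ j') < hM e δe →
            hcond e δe (sweepSet σ j) ≤ hcond e δe (sweepSet σ j')) →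
          hcond e δe (sweepSet σ j) ≤
            deltaBar e δe (sweepSet σ j) *
              Real.sqrt (32 * γ * Real.log (100 * hvol e δe S / hdeg e δe v))), μ v := by
  have hd1 := HCheeger.one_le_hdeg e δe hcard hδe hcov
  have hd0 : ∀ v, 0 < hdeg e δe v := fun v => one_pos.trans_le (hd1 v)
  have hvol1 : ∀ v : V, hvol e δe {v} = hdeg e δe v := fun v => Finset.sum_singleton _ _
  -- mass leaked from `S` by the seed `v`
  set f : V → ℝ := fun v => ∑ u ∈ Sᶜ, hdeg e δe u * xseed v u with hf
  have hf0 : ∀ v ∈ S, 0 ≤ f v := fun v hv => by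
    obtain ⟨a, b, hst⟩ := HCheeger.exists_stationary e δe hcard hδe γ {v} (xseed v) (hxseed v hv)
    refine Finset.sum_nonneg fun u _ => mul_nonneg (hd0 u).le
      (hst.nonneg e δe hcard hδe hγ hcov (fun w => ?_) u)
    rw [hvol1]
    have := hd0 v
    split_ifs <;> positivity
  have hmean : ∑ v, μ v * f v ≤ 1 / 8 := by
    obtain ⟨a, b, hst⟩ := HCheeger.exists_stationary e δe hcard hδe γ S xS hxS
    have h1 := hst.leak_le e δe hcard hδe hγ hcov hS0
    have h2 : hcut e δe S / hvol e δe S ≤ γ / (8 * c) := by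
      rwa [hcond, min_eq_left (by linarith)] at hφS
    have h3 := h1.trans h2
    have h4 : ∑ u ∈ Sᶜ, hdeg e δe u * xS u ≤ 1 / (8 * c) := by
      refine le_of_mul_le_mul_left (h3.trans_eq ?_) hγ
      ring
    calc _ ≤ _ := hexp
      _ ≤ c * (1 / (8 * c)) := by gcongr
      _ = 1 / 8 := by field_simp
  -- Markov: a seed leaks more than `1/4` with probability at most `1/2`
  have hMarkov : 1 / 2 ≤ ∑ v ∈ univ.filter (fun v => v ∈ S ∧ f v ≤ 1 / 4), μ v := by
    have h1 : ∀ v, μ v ≤ (if v ∈ S ∧ f v ≤ 1 / 4 then μ v else 0) + 4 * (μ v * f v) := by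
      intro v
      by_cases hv : v ∈ S
      · have := mul_nonneg (hμ0 v) (hf0 v hv)
        by_cases hle : f v ≤ 1 / 4
        · rw [if_pos ⟨hv, hle⟩]
          linarith
        · rw [if_neg fun h => hle h.2]
          nlinarith [hμ0 v, not_le.1 hle]
      · simp [hμsupp v hv, hv]
    have h2 := Finset.sum_le_sum fun v (_ : v ∈ univ) => h1 v
    rw [Finset.sum_add_distrib, ← Finset.mul_sum, ← Finset.sum_filter, hμ1] at h2
    linarith
  refine hMarkov.trans (Finset.sum_le_sum_of_subset_of_nonneg ?_ fun v _ _ => hμ0 v)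
  intro v hvG
  obtain ⟨-, hv, hfv⟩ := Finset.mem_filter.1 hvG
  refine Finset.mem_filter.2 ⟨Finset.mem_univ _, fun σ hσ j hj hj1 hj2 hmin => ?_⟩
  obtain ⟨a, b, hst⟩ := HCheeger.exists_stationary e δe hcard hδe γ {v} (xseed v) (hxseed v hv)
  have hmass : 3 / 4 ≤ ∑ u ∈ S, hdeg e δe u * xseed v u := by
    have h1 := hst.total e δe hγ
    have h2 : ∑ u, hdeg e δe u * ((if u ∈ ({v} : Finset V) then 1 else 0) / hvol e δe {v}) = 1 := by
      rw [Finset.sum_eq_single v]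
      · rw [if_pos (Finset.mem_singleton_self v), hvol1]
        exact mul_one_div_cancel (hd0 v).ne'
      · intro u _ hu
        simp [hu]
      · simp
    rw [h2, ← Finset.sum_add_sum_compl S] at h1
    change f v ≤ 1 / 4 at hfv
    simp only [hf] at hfv
    linarith
  have hdS : hdeg e δe v ≤ hvol e δe S :=
    Finset.single_le_sum (f := hdeg e δe) (fun u _ => (hd0 u).le) hv
  have hlog : 0 ≤ Real.log (100 * hvol e δe S / hdeg e δe v) := by
    refine Real.log_nonneg ?_
    rw [le_div_iff₀ (hd0 v)]
    linarith
  set κ := Real.sqrt (32 * γ * Real.log (100 * hvol e δe S / hdeg e δe v)) with hκ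
  have hκ0 : 0 ≤ κ := Real.sqrt_nonneg _
  have hκsq : κ ^ 2 = 32 * γ * Real.log (100 * hvol e δe S / hdeg e δe v) :=
    Real.sq_sqrt (by positivity)
  rcases (hbdry e (sweepSet σ j)).eq_empty_or_nonempty with hemp | hne
  · have h1 : hcond e δe (sweepSet σ j) = 0 := by
      rw [hcond, HCheeger.hcut_eq_zero_of_hbdry_empty e δe hδe _ hemp, zero_div]
    -- the supremum defining `deltaBar` is over the empty set, hence `0`
    have h2 : deltaBar e δe (sweepSet σ j) = 0 := by
      rw [deltaBar, hemp]
      simp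
    rw [h1, h2, zero_mul]
  by_contra! hcon
  have hκle : κ ≤ hcond e δe (sweepSet σ j) :=
    (le_mul_of_one_le_left hκ0
      (HCheeger.one_le_deltaBar e δe hcard hδe _ hne)).trans hcon.le
  refine absurd hmass (not_le.2 (HCheeger.mass_lt e δe hcard hδe hcov hγ hst hv hS2 hκ0 hκsq
    fun T hT hT0 hTM => ?_))
  obtain ⟨j', hj', rfl⟩ := HCheeger.exists_sweepSet_eq σ hσ T hT
  have h1 := hκle.trans (hmin j' hj' hT0 hTM)
  rwa [hcond, le_div_iff₀ (lt_min hT0 (by linarith))] at h1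
end

section
/- Let H = (V,𝓔) be a hypergraph as above, let S ⊆ V with vol(S) > 0, γ > 0, and let x = x(γ,S) be the minimizer of Q. Let φ_x be the sweep-cut conductance of x, attained at S_x, let ∂S_x = { e ∈ 𝓔 : e∩S_x ≠ ∅ and e∩(V∖S_x) ≠ ∅ }, and set σ_x = ( 2 max_{e∈∂S_x} min{δ_e, |e|/2} + 1 )^{-1}. Then for every positive integer t and every k ∈ [0, M], the Lovász–Simonovits curve of x satisfies I_x(k) ≤ k/M + γ t/(2+γ) + sqrt( min(k, M−k) / min_{i∈S} d_i ) · (1 − σ_x² φ_x² / 8)^t. -/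
/-!
The proof runs the Lovász–Simonovits argument on the gadget form of the diffusion.

*Stationarity.* For each hyperedge the inner problem attains its minimum at some `b ≤ a`, where the
flow entering the gadget, the flow through the middle arc and the flow leaving it coincide. Each
summand is a squared positive part, hence lies below a quadratic with the right slope, so the
minimality of `x` gives for every vertex set `T` that `γ Σ_{v∈T} d_v (x_v - 1_S(v)/vol S)` plus the
flow leaving `T` is zero (`Qobj_stationary`). Flow goes from high to low values of `x`; hence
`Σ d_v x_v = 1` and `0 ≤ x_v ≤ 1/vol S` (`minimizer_range`).

*Transport.* Across a hyperedge cut by a superlevel set `T`, the flow leaving `T` is at least the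
loss of `x`-value when a mass equal to one third of the splitting penalty, at most one unit per
vertex, moves from suitable vertices inside to suitable vertices outside (`gadget_transport`). The
factor `1/3` reflects three resistances in series: the arcs into the gadget, the middle arc, and
the arcs out of it. Every `min {δ_ε, |ε|/2}` is at least `1`, so `σ_x ≤ 1/3` unless the optimal
sweep cut is zero, in which case `φ_x = 0` (`edge_const_mul_cond_le`); this is why the constant
`σ_x`, defined by the boundary of one sweep set only, serves for all sweep sets.

*Recursion.* Since `I_x(k)` is the largest `x`-value of a fractional vertex set of volume `k`
(`le_LScurve`), summing over hyperedges gives, at a sweep set of volume `k` and cut `c`,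
`(2 + γ) I_x(k) ≤ γ + I_x(k - c/3) + I_x(k + c/3)` (`LS_recursion`).

*Induction on `t`.* The case `t = 0` follows from `I_x ≤ 1` and `I_x(k) ≤ k / vol S`. In the
inductive step the right-hand side is concave in `k` and `I_x` is piecewise linear, so only
breakpoints matter (`LScurve_le_of_concave`); there the recursion applies, and `sqrt_shift_le`
supplies the factor `1 - σ_x² φ_x² / 8`.
-/

open Finset

open Finset in
/-- Cumulative volume of the first `j` vertices in the order `σ`. -/
noncomputable def cumVol {V : Type*} {n : ℕ} (σ : Fin n ≃ V) (d : V → ℝ) (j : ℕ) : ℝ :=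
  ∑ i ∈ univ.filter (fun i : Fin n => (i : ℕ) < j), d (σ i)

open Finset in
/-- The Lovász–Simonovits curve of `x` with respect to a (decreasingly sorted)
enumeration `σ`: the piecewise-linear function on `[0,M]` with `I_x(0) = 0`,
breakpoints `I_x(vol S_j) = Σ_{v∈S_j} d_v x_v`, and linear interpolation in between. -/
noncomputable def LScurve {V : Type*} {n : ℕ} (σ : Fin n ≃ V) (d x : V → ℝ)
    (k : ℝ) : ℝ :=
  ∑ i : Fin n,
    x (σ i) * (min k (cumVol σ d ((i : ℕ) + 1)) - min k (cumVol σ d (i : ℕ)))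

/-! ### Optimality of the gadget potentials -/

/-- The squared positive part lies below its tangent line plus `h²`, which replaces
differentiability in the first-order conditions. -/
theorem posSq_add_le (t h : ℝ) :
    (max (t + h) 0) ^ 2 ≤ (max t 0) ^ 2 + 2 * h * max t 0 + h ^ 2 := by
  rcases max_cases (t + h) 0 with ⟨h1, h2⟩ | ⟨h1, h2⟩ <;>
  rcases max_cases t 0 with ⟨h3, h4⟩ | ⟨h3, h4⟩ <;> rw [h1, h3] <;> nlinarith

theorem eq_zero_of_quadratic_nonneg (D C : ℝ) (hC : 0 ≤ C)
    (h : ∀ s : ℝ, 0 ≤ 2 * s * D + s ^ 2 * C) : D = 0 := by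
  have h1 := h (-D / (C + 1))
  have hC1 : 0 < C + 1 := by linarith
  have h2 : 2 * (-D / (C + 1)) * D + (-D / (C + 1)) ^ 2 * C
      = -(D ^ 2 * (C + 2)) / (C + 1) ^ 2 := by
    field_simp
    ring
  rw [h2, div_nonneg_iff] at h1
  have h3 : 0 < (C + 1) ^ 2 := by positivity
  have h4 : D ^ 2 * (C + 2) ≤ 0 := by
    rcases h1 with h1 | h1 <;> linarith [h1.1, h1.2]
  have : D ^ 2 ≤ 0 := by nlinarith [sq_nonneg D]
  exact pow_eq_zero_iff (two_ne_zero) |>.1 (le_antisymm this (sq_nonneg D))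

theorem posPart_clamp_le (lo hi p q : ℝ) :
    max (max lo (min p hi) - max lo (min q hi)) 0 ≤ max (p - q) 0 := by
  refine max_le ?_ (le_max_right _ _)
  rcases le_total p q with h | h
  · have : max lo (min p hi) ≤ max lo (min q hi) :=
      max_le_max le_rfl (min_le_min h le_rfl)
    exact le_trans (by linarith) (le_max_right _ _)
  · refine le_trans ?_ (le_max_left _ _)
    rcases max_cases lo (min p hi) with h1 | h1 <;> rcases max_cases lo (min q hi) with h2 | h2 <;>
    rcases min_cases p hi with h3 | h3 <;> rcases min_cases q hi with h4 | h4 <;> linarith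

theorem innerQ_nonneg {V E : Type*} [DecidableEq V] (e : E → Finset V) (δe : E → ℝ)
    (hδe : ∀ ε, 1 ≤ δe ε) (ε : E) (x : V → ℝ) (a b : ℝ) : 0 ≤ innerQ e δe ε x a b := by
  have := hδe ε
  unfold innerQ
  refine add_nonneg (sum_nonneg fun v _ => by positivity) (mul_nonneg (by linarith) (by positivity))

/-- The inner gadget problem attains its minimum: clamping `a` and `b` to the range of `x` on the
hyperedge does not increase the objective, so only a compact square matters. -/
theorem exists_innerQ_min {V E : Type*} [DecidableEq V] (e : E → Finset V) (δe : E → ℝ)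
    (hcard : ∀ ε, 2 ≤ (e ε).card) (hδe : ∀ ε, 1 ≤ δe ε) (ε : E) (x : V → ℝ) :
    ∃ a b : ℝ, ∀ a' b' : ℝ, innerQ e δe ε x a b ≤ innerQ e δe ε x a' b' := by
  have hne : (e ε).Nonempty := card_pos.1 (by have := hcard ε; omega)
  obtain ⟨v0, hv0, hlo⟩ := exists_min_image (e ε) x hne
  obtain ⟨v1, hv1, hhi⟩ := exists_max_image (e ε) x hne
  have hcont : Continuous fun p : ℝ × ℝ => innerQ e δe ε x p.1 p.2 := by
    unfold innerQ; fun_prop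
  obtain ⟨⟨a, b⟩, _, hmin⟩ := (isCompact_Icc (a := x v0) (b := x v1)).prod
    (isCompact_Icc (a := x v0) (b := x v1)) |>.exists_isMinOn
      ⟨(x v0, x v0), by simp [hhi v0 hv0]⟩ hcont.continuousOn
  refine ⟨a, b, fun a' b' => ?_⟩
  have h01 : x v0 ≤ x v1 := hlo v1 hv1
  have hmem : ∀ p : ℝ, max (x v0) (min p (x v1)) ∈ Set.Icc (x v0) (x v1) := fun p =>
    ⟨le_max_left _ _, max_le h01 (min_le_right _ _)⟩
  refine le_trans (hmin (Set.mk_mem_prod (hmem a') (hmem b'))) ?_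
  have hfix : ∀ v ∈ e ε, max (x v0) (min (x v) (x v1)) = x v := fun v hv => by
    rw [min_eq_left (hhi v hv), max_eq_right (hlo v hv)]
  have hδ := hδe ε
  simp only [innerQ]
  refine add_le_add (sum_le_sum fun v hv => add_le_add ?_ ?_)
    (mul_le_mul_of_nonneg_left ?_ (by linarith))
  · have := posPart_clamp_le (x v0) (x v1) (x v) a'
    rw [hfix v hv] at this
    exact pow_le_pow_left₀ (le_max_right _ _) this 2
  · have := posPart_clamp_le (x v0) (x v1) b' (x v)
    rw [hfix v hv] at this
    exact pow_le_pow_left₀ (le_max_right _ _) this 2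
  · exact pow_le_pow_left₀ (le_max_right _ _) (posPart_clamp_le _ _ _ _) 2

/-- First-order condition of the gadget in the variable `a`: the flow entering the gadget equals
the flow through its middle arc. -/
theorem innerQ_opt_a {V E : Type*} [DecidableEq V] (e : E → Finset V) (δe : E → ℝ)
    (hδe : ∀ ε, 1 ≤ δe ε) (ε : E) (x : V → ℝ) (a b : ℝ)
    (h : ∀ a' b' : ℝ, innerQ e δe ε x a b ≤ innerQ e δe ε x a' b') :
    ∑ v ∈ e ε, max (x v - a) 0 = δe ε * max (a - b) 0 := by
  have hδ := hδe ε
  have key := eq_zero_of_quadratic_nonneg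
    (δe ε * max (a - b) 0 - ∑ v ∈ e ε, max (x v - a) 0) ((e ε).card + δe ε) (by positivity) ?_
  · linarith
  intro s
  have h1 := h (a + s) b
  have h2 : innerQ e δe ε x (a + s) b ≤ innerQ e δe ε x a b +
      (2 * s * (δe ε * max (a - b) 0 - ∑ v ∈ e ε, max (x v - a) 0)
        + s ^ 2 * ((e ε).card + δe ε)) := by
    have h3 : ∑ v ∈ e ε, ((max (x v - (a + s)) 0) ^ 2 + (max (b - x v) 0) ^ 2)
        ≤ ∑ v ∈ e ε, (((max (x v - a) 0) ^ 2 + (max (b - x v) 0) ^ 2)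
            + ((-(2 * s)) * max (x v - a) 0 + s ^ 2)) := by
      refine sum_le_sum fun v _ => ?_
      have := posSq_add_le (x v - a) (-s)
      rw [show x v - a + -s = x v - (a + s) by ring] at this
      linarith
    simp only [sum_add_distrib, ← mul_sum, sum_const, nsmul_eq_mul] at h3
    have h4 := posSq_add_le (a - b) s
    rw [show a - b + s = a + s - b by ring] at h4
    have h5 := mul_le_mul_of_nonneg_left h4 (by linarith : 0 ≤ δe ε)
    simp only [innerQ, sum_add_distrib]
    linarith
  linarith

/-- First-order condition of the gadget in the variable `b`. -/
theorem innerQ_opt_b {V E : Type*} [DecidableEq V] (e : E → Finset V) (δe : E → ℝ)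
    (hδe : ∀ ε, 1 ≤ δe ε) (ε : E) (x : V → ℝ) (a b : ℝ)
    (h : ∀ a' b' : ℝ, innerQ e δe ε x a b ≤ innerQ e δe ε x a' b') :
    ∑ v ∈ e ε, max (b - x v) 0 = δe ε * max (a - b) 0 := by
  have hδ := hδe ε
  have key := eq_zero_of_quadratic_nonneg
    (∑ v ∈ e ε, max (b - x v) 0 - δe ε * max (a - b) 0) ((e ε).card + δe ε) (by positivity) ?_
  · linarith
  intro s
  have h1 := h a (b + s)
  have h2 : innerQ e δe ε x a (b + s) ≤ innerQ e δe ε x a b +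
      (2 * s * (∑ v ∈ e ε, max (b - x v) 0 - δe ε * max (a - b) 0)
        + s ^ 2 * ((e ε).card + δe ε)) := by
    have h3 : ∑ v ∈ e ε, ((max (x v - a) 0) ^ 2 + (max (b + s - x v) 0) ^ 2)
        ≤ ∑ v ∈ e ε, (((max (x v - a) 0) ^ 2 + (max (b - x v) 0) ^ 2)
            + ((2 * s) * max (b - x v) 0 + s ^ 2)) := by
      refine sum_le_sum fun v _ => ?_
      have := posSq_add_le (b - x v) s
      rw [show b - x v + s = b + s - x v by ring] at this
      linarith
    simp only [sum_add_distrib, ← mul_sum, sum_const, nsmul_eq_mul] at h3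
    have h4 := posSq_add_le (a - b) (-s)
    rw [show a - b + -s = a - (b + s) by ring] at h4
    have h5 := mul_le_mul_of_nonneg_left h4 (by linarith : 0 ≤ δe ε)
    simp only [innerQ, sum_add_distrib]
    linarith
  linarith

theorem innerQ_opt_le {V E : Type*} [DecidableEq V] (e : E → Finset V) (δe : E → ℝ)
    (hcard : ∀ ε, 2 ≤ (e ε).card) (hδe : ∀ ε, 1 ≤ δe ε) (ε : E) (x : V → ℝ) (a b : ℝ)
    (h : ∀ a' b' : ℝ, innerQ e δe ε x a b ≤ innerQ e δe ε x a' b') : b ≤ a := by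
  have ha := innerQ_opt_a e δe hδe ε x a b h
  have hb := innerQ_opt_b e δe hδe ε x a b h
  by_contra! hab
  rw [max_eq_right (by linarith : a - b ≤ 0), mul_zero] at ha hb
  obtain ⟨v, hv⟩ : (e ε).Nonempty := card_pos.1 (by have := hcard ε; omega)
  have h1 := (sum_eq_zero_iff_of_nonneg (fun v _ => le_max_right _ _)).1 ha v hv
  have h2 := (sum_eq_zero_iff_of_nonneg (fun v _ => le_max_right _ _)).1 hb v hv
  have h3 := le_max_left (x v - a) 0
  have h4 := le_max_left (b - x v) 0
  linarith

/-! ### Stationarity of the minimizer -/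

/-- Net flow sent by vertex `v`, at potential `x v`, into a gadget with potentials `a` and `b`. -/
def gflow {V : Type*} (x : V → ℝ) (a b : ℝ) (v : V) : ℝ :=
  max (x v - a) 0 - max (b - x v) 0

theorem innerQ_add_le {V E : Type*} [DecidableEq V] (e : E → Finset V) (δe : E → ℝ) (ε : E)
    (x : V → ℝ) (a b s : ℝ) (T : Finset V) :
    innerQ e δe ε (fun v => x v + if v ∈ T then s else 0) a b ≤ innerQ e δe ε x a b +
      (2 * s * ∑ v ∈ e ε ∩ T, gflow x a b v + s ^ 2 * (2 * (e ε).card)) := by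
  have h3 : ∑ v ∈ e ε, ((max ((x v + if v ∈ T then s else 0) - a) 0) ^ 2
        + (max (b - (x v + if v ∈ T then s else 0)) 0) ^ 2)
      ≤ ∑ v ∈ e ε, (((max (x v - a) 0) ^ 2 + (max (b - x v) 0) ^ 2)
          + ((2 * s) * (if v ∈ T then gflow x a b v else 0) + s ^ 2 * 2)) := by
    refine sum_le_sum fun v _ => ?_
    split_ifs
    · have h1 := posSq_add_le (x v - a) s
      have h2 := posSq_add_le (b - x v) (-s)
      rw [show x v - a + s = x v + s - a by ring] at h1
      rw [show b - x v + -s = b - (x v + s) by ring] at h2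
      unfold gflow
      linarith
    · simp only [add_zero]
      nlinarith [sq_nonneg s]
  simp only [sum_add_distrib, ← mul_sum, sum_const, nsmul_eq_mul, ← sum_filter,
    filter_mem_eq_inter] at h3
  simp only [innerQ, sum_add_distrib]
  linarith

/-- Stationarity of the minimizer in the direction of an indicator `1_T`: the flow leaving `T`
through all gadgets balances the demand of the quadratic seed term on `T`. -/
theorem Qobj_stationary {V E : Type*} [Fintype V] [Fintype E] [DecidableEq V]
    (e : E → Finset V) (δe : E → ℝ) (hδe : ∀ ε, 1 ≤ δe ε)
    (hd : ∀ v, 0 ≤ hdeg e δe v)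
    (γ : ℝ) (hγ : 0 < γ) (S : Finset V)
    (x : V → ℝ) (hx : ∀ y : V → ℝ, Qobj e δe γ S x ≤ Qobj e δe γ S y)
    (a b : E → ℝ)
    (hab : ∀ ε a' b', innerQ e δe ε x (a ε) (b ε) ≤ innerQ e δe ε x a' b') (T : Finset V) :
    γ * ∑ v ∈ T, hdeg e δe v * (x v - (if v ∈ S then 1 else 0) / hvol e δe S)
      + ∑ ε, ∑ v ∈ e ε ∩ T, gflow x (a ε) (b ε) v = 0 := by
  have hQle : ∀ ε y a' b', Qe e δe ε y ≤ innerQ e δe ε y a' b' := fun ε y a' b' =>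
    csInf_le ⟨0, by rintro q ⟨a, b, rfl⟩; exact innerQ_nonneg e δe hδe ε y a b⟩ ⟨a', b', rfl⟩
  have hQx : ∀ ε, Qe e δe ε x = innerQ e δe ε x (a ε) (b ε) := fun ε =>
    le_antisymm (hQle _ _ _ _) (le_csInf ⟨_, 0, 0, rfl⟩ (by rintro q ⟨a', b', rfl⟩; exact hab ε a' b'))
  refine eq_zero_of_quadratic_nonneg _
    (γ * ∑ v, hdeg e δe v + ∑ ε, 2 * ((e ε).card : ℝ))
    (add_nonneg (mul_nonneg hγ.le (sum_nonneg fun v _ => hd v))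
      (sum_nonneg fun ε _ => by positivity)) fun s => ?_
  have h1 := hx (fun v => x v + if v ∈ T then s else 0)
  unfold Qobj at h1
  have h2 : ∑ ε, Qe e δe ε (fun v => x v + if v ∈ T then s else 0) ≤
      ∑ ε, (innerQ e δe ε x (a ε) (b ε) +
      (2 * s * ∑ v ∈ e ε ∩ T, gflow x (a ε) (b ε) v + s ^ 2 * (2 * (e ε).card))) :=
    sum_le_sum fun ε _ => (hQle ε _ (a ε) (b ε)).trans (innerQ_add_le _ _ _ _ _ _ _ _)
  rw [sum_add_distrib, sum_add_distrib, ← mul_sum, ← mul_sum] at h2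
  have h3 : ∑ v, hdeg e δe v * ((x v + if v ∈ T then s else 0) -
        (if v ∈ S then 1 else 0) / hvol e δe S) ^ 2
      ≤ ∑ v, (hdeg e δe v * (x v - (if v ∈ S then 1 else 0) / hvol e δe S) ^ 2
        + (2 * s * (if v ∈ T then
          hdeg e δe v * (x v - (if v ∈ S then 1 else 0) / hvol e δe S) else 0)
          + s ^ 2 * hdeg e δe v)) := by
    refine sum_le_sum fun v _ => ?_
    have := mul_nonneg (sq_nonneg s) (hd v)
    by_cases hv : v ∈ T
    · simp only [hv, if_true]
      apply le_of_eq
      ring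
    · simp only [hv, if_false]
      rw [add_zero]
      linarith
  rw [sum_add_distrib, sum_add_distrib, ← mul_sum, ← mul_sum, ← sum_filter,
    filter_mem_eq_inter, univ_inter] at h3
  have h4 := mul_le_mul_of_nonneg_left h3 hγ.le
  rw [sum_congr rfl fun ε _ => hQx ε] at h1
  linarith

/-! ### Transport across a hyperedge -/

/-- Balanced mass transport across a gadget when no vertex of `L` lies below the lower gadget
potential `b`: mass `y` can be taken from `L` and placed on `R`, at most one unit per vertex, so
that the resulting loss of `x`-value is at most the flow leaving `L`.  The mass is uniform on `L`;
on `R`, vertices above `a` get up to `2/3` each, and the others share the rest equally. -/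
theorem gadget_transport_aux {V : Type*} [DecidableEq V] (L R : Finset V) (x : V → ℝ) (a b δ y : ℝ)
    (hL0 : L.Nonempty) (hR0 : R.Nonempty)
    (hδ : 0 < δ) (hy : 0 ≤ y) (hyL : 3 * y ≤ L.card) (hyR : 3 * y ≤ R.card) (hyδ : 3 * y ≤ δ)
    (ha : ∑ v ∈ L, max (x v - a) 0 + ∑ v ∈ R, max (x v - a) 0 = δ * (a - b))
    (hb : ∑ v ∈ R, max (b - x v) 0 = δ * (a - b)) :
    ∃ w u : V → ℝ, (∀ v, 0 ≤ w v ∧ w v ≤ 1) ∧ (∀ v, 0 ≤ u v ∧ u v ≤ 1) ∧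
      ∑ v ∈ L, w v = y ∧ ∑ v ∈ R, u v = y ∧
      ∑ v ∈ L, w v * x v - ∑ v ∈ R, u v * x v ≤ ∑ v ∈ L, max (x v - a) 0 := by
  set R1 := R.filter (fun v => a < x v) with hR1
  set R2 := R.filter (fun v => ¬ a < x v) with hR2
  have hsplit : ∀ g : V → ℝ, ∑ v ∈ R, g v = ∑ v ∈ R1, g v + ∑ v ∈ R2, g v := fun g =>
    (sum_filter_add_sum_filter_not R _ g).symm
  have hcardR : (R.card : ℝ) = R1.card + R2.card := by
    have := hsplit (fun _ => 1); simpa using this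
  have hl : (0 : ℝ) < L.card := by exact_mod_cast hL0.card_pos
  have hr : (0 : ℝ) < R.card := by exact_mod_cast hR0.card_pos
  set l : ℝ := (L.card : ℝ)
  set r : ℝ := (R.card : ℝ)
  set r1 : ℝ := (R1.card : ℝ) with hr1
  set r2 : ℝ := (R2.card : ℝ) with hr2
  have hr1n : 0 ≤ r1 := by positivity
  have hr2n : 0 ≤ r2 := by positivity
  set F := ∑ v ∈ L, max (x v - a) 0 with hF
  have hFn : 0 ≤ F := sum_nonneg fun v _ => le_max_right _ _
  set P := ∑ v ∈ R, max (x v - a) 0 with hP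
  have hPn : 0 ≤ P := sum_nonneg fun v _ => le_max_right _ _
  have hP1 : P = ∑ v ∈ R1, (x v - a) := by
    rw [hP, hsplit]
    rw [sum_congr rfl (fun v hv => max_eq_left (by
      have := (mem_filter.1 hv).2; linarith) : ∀ v ∈ R1, max (x v - a) 0 = x v - a)]
    rw [sum_eq_zero (s := R2) (fun v hv => max_eq_right (by
      have := (mem_filter.1 hv).2; linarith)), add_zero]
  -- `α` is the weight on `R1`, `β` on `R2`.  The last condition makes the coefficient of `P`
  -- nonpositive, so the flow `P` coming from the vertices of `R` above `a` needs no bound.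
  obtain ⟨α, β, hα0, hα1, hβ0, hβ1, hsum, hb2, hαβ⟩ : ∃ α β : ℝ, 0 ≤ α ∧ α ≤ 1 ∧ 0 ≤ β ∧
      β * r ≤ y ∧ α * r1 + β * r2 = y ∧ β * r2 ≤ y ∧ β * r2 / δ + β ≤ α := by
    by_cases hc : 2 / 3 * r1 ≤ y
    · have hr2p : 0 < r2 := by nlinarith
      have hβr2 : (y - 2 / 3 * r1) / r2 * r2 = y - 2 / 3 * r1 := by field_simp
      have hβn : 0 ≤ (y - 2 / 3 * r1) / r2 := div_nonneg (by linarith) hr2p.le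
      have hβr : (y - 2 / 3 * r1) / r2 * r ≤ y := by
        rw [div_mul_eq_mul_div, div_le_iff₀ hr2p]
        nlinarith
      refine ⟨2 / 3, (y - 2 / 3 * r1) / r2, by norm_num, by norm_num, hβn, hβr, ?_, ?_, ?_⟩
      · rw [hβr2]; ring
      · rw [hβr2]; linarith
      · rw [hβr2]
        have h1 : (y - 2 / 3 * r1) / δ ≤ 1 / 3 := by
          rw [div_le_iff₀ hδ]; linarith
        have h2 : (y - 2 / 3 * r1) / r2 ≤ 1 / 3 := by
          by_contra! h3
          nlinarith
        linarith
    · push Not at hc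
      have hr1p : 0 < r1 := by nlinarith
      refine ⟨y / r1, 0, by positivity, ?_, le_rfl, by linarith, by field_simp; ring, by linarith,
        by simp; positivity⟩
      rw [div_le_one hr1p]; linarith
  have hβle : β ≤ 1 := by
    by_contra! h
    nlinarith
  refine ⟨fun _ => y / l, fun v => if a < x v then α else β, fun v => ⟨by positivity, ?_⟩,
    fun v => ?_, ?_, ?_, ?_⟩
  · rw [div_le_one hl]; linarith
  · dsimp only; split_ifs <;> constructor <;> assumption
  · rw [sum_const, nsmul_eq_mul]
    change l * (y / l) = y
    field_simp
  · rw [hsplit, sum_congr rfl (fun v hv => if_pos (mem_filter.1 hv).2),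
      sum_congr (s₁ := R2) rfl (fun v hv => if_neg (mem_filter.1 hv).2)]
    rw [sum_const, sum_const, nsmul_eq_mul, nsmul_eq_mul, ← hsum]
    ring
  · have h1 : ∑ v ∈ L, y / l * x v ≤ y * a + y / l * F := by
      have : ∑ v ∈ L, y / l * x v ≤ ∑ v ∈ L, (y / l * a + y / l * max (x v - a) 0) :=
        sum_le_sum fun v _ => by
          rw [← mul_add]
          exact mul_le_mul_of_nonneg_left (by linarith [le_max_left (x v - a) 0]) (by positivity)
      rw [sum_add_distrib, sum_const, nsmul_eq_mul] at this
      have h : l * (y / l * a) = y * a := by field_simp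
      change _ ≤ l * (y / l * a) + _ at this
      rw [hF, mul_sum]
      linarith
    have h2 : ∑ v ∈ R1, α * x v = α * P + α * r1 * a := by
      rw [hP1, sum_sub_distrib, sum_const, nsmul_eq_mul, ← mul_sum]
      ring
    have h3 : β * r2 * b - β * (δ * (a - b)) ≤ ∑ v ∈ R2, β * x v := by
      have h4 : ∑ v ∈ R2, max (b - x v) 0 ≤ δ * (a - b) := by
        rw [← hb]
        exact sum_le_sum_of_subset_of_nonneg (filter_subset _ _) fun v _ _ => le_max_right _ _
      have h5 : ∑ v ∈ R2, (b - max (b - x v) 0) ≤ ∑ v ∈ R2, x v :=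
        sum_le_sum fun v _ => by linarith [le_max_left (b - x v) 0]
      rw [sum_sub_distrib, sum_const, nsmul_eq_mul] at h5
      rw [← mul_sum]
      nlinarith
    rw [hsplit, sum_congr rfl (fun v hv => by rw [if_pos (mem_filter.1 hv).2] :
        ∀ v ∈ R1, (if a < x v then α else β) * x v = α * x v),
      sum_congr rfl (fun v hv => by rw [if_neg (mem_filter.1 hv).2] :
        ∀ v ∈ R2, (if a < x v then α else β) * x v = β * x v), h2]
    have hab : a - b = (F + P) / δ := by field_simp; linarith
    have h6 : ∑ v ∈ L, y / l * x v - (α * P + α * r1 * a + ∑ v ∈ R2, β * x v)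
        ≤ F * (y / l + β * r2 / δ + β) + P * (β * r2 / δ + β - α) := by
      have e1 : y * a = α * r1 * a + β * r2 * a := by rw [← hsum]; ring
      have e2 : β * r2 * a - β * r2 * b = β * r2 * ((F + P) / δ) := by rw [← hab]; ring
      have e3 : β * (δ * (a - b)) = β * (F + P) := by rw [ha]
      have e4 : β * r2 * ((F + P) / δ) = F * (β * r2 / δ) + P * (β * r2 / δ) := by ring
      linarith
    have h7 : y / l ≤ 1 / 3 := by rw [div_le_iff₀ hl]; linarith
    have h8 : β * r2 / δ ≤ 1 / 3 := by rw [div_le_iff₀ hδ]; linarith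
    have h9 : β ≤ 1 / 3 := by
      by_contra! h
      nlinarith
    have h10 : F * (y / l + β * r2 / δ + β) ≤ F * 1 := mul_le_mul_of_nonneg_left (by linarith) hFn
    have h11 : P * (β * r2 / δ + β - α) ≤ 0 := mul_nonpos_of_nonneg_of_nonpos hPn (by linarith)
    linarith

theorem gflow_mono {V : Type*} (x : V → ℝ) (a b : ℝ) {u v : V} (h : x u ≤ x v) :
    gflow x a b u ≤ gflow x a b v := by
  unfold gflow
  have h1 : max (x u - a) 0 ≤ max (x v - a) 0 := max_le_max (by linarith) le_rfl
  have h2 : max (b - x v) 0 ≤ max (b - x u) 0 := max_le_max (by linarith) le_rfl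
  linarith

/-- The net flow of a gadget goes from higher to lower potentials. -/
theorem sum_gflow_nonneg {V : Type*} (L R : Finset V) (x : V → ℝ) (a b : ℝ)
    (hLR : ∀ v ∈ L, ∀ u ∈ R, x u ≤ x v)
    (h0 : ∑ v ∈ L, gflow x a b v + ∑ v ∈ R, gflow x a b v = 0) :
    0 ≤ ∑ v ∈ L, gflow x a b v := by
  by_cases h : ∀ v ∈ L, 0 ≤ gflow x a b v
  · exact sum_nonneg h
  · push Not at h
    obtain ⟨v, hv, hneg⟩ := h
    have : ∑ u ∈ R, gflow x a b u ≤ 0 := sum_nonpos fun u hu =>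
      (gflow_mono x a b (hLR v hv u hu)).trans hneg.le
    linarith

/-- Balanced mass transport across a gadget separated by a superlevel set `L`.  The case in which
some vertex of `L` lies below `b` reduces to `gadget_transport_aux` by negating `x`. -/
theorem gadget_transport {V : Type*} [DecidableEq V] (L R : Finset V) (x : V → ℝ) (a b δ y : ℝ)
    (hL0 : L.Nonempty) (hR0 : R.Nonempty) (hLR : ∀ v ∈ L, ∀ u ∈ R, x u ≤ x v)
    (hδ : 0 < δ) (hy : 0 ≤ y) (hyL : 3 * y ≤ L.card) (hyR : 3 * y ≤ R.card) (hyδ : 3 * y ≤ δ)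
    (hba : b ≤ a)
    (ha : ∑ v ∈ L, max (x v - a) 0 + ∑ v ∈ R, max (x v - a) 0 = δ * (a - b))
    (hb : ∑ v ∈ L, max (b - x v) 0 + ∑ v ∈ R, max (b - x v) 0 = δ * (a - b)) :
    ∃ w u : V → ℝ, (∀ v, 0 ≤ w v ∧ w v ≤ 1) ∧ (∀ v, 0 ≤ u v ∧ u v ≤ 1) ∧
      ∑ v ∈ L, w v = y ∧ ∑ v ∈ R, u v = y ∧
      ∑ v ∈ L, w v * x v - ∑ v ∈ R, u v * x v ≤ ∑ v ∈ L, gflow x a b v := by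
  unfold gflow
  rw [sum_sub_distrib]
  by_cases h : ∀ v ∈ L, b ≤ x v
  · have h0 : ∑ v ∈ L, max (b - x v) 0 = 0 :=
      sum_eq_zero fun v hv => max_eq_right (by linarith [h v hv])
    rw [h0, zero_add] at hb
    obtain ⟨w, u, hw⟩ := gadget_transport_aux L R x a b δ y hL0 hR0 hδ hy hyL hyR hyδ ha hb
    exact ⟨w, u, by rw [h0, sub_zero]; exact hw⟩
  · push Not at h
    obtain ⟨v, hv, hvb⟩ := h
    have h0 : ∑ u ∈ R, max (x u - a) 0 = 0 :=
      sum_eq_zero fun u hu => max_eq_right (by linarith [hLR v hv u hu])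
    obtain ⟨w, u, hw, hu, hws, hus, hle⟩ := gadget_transport_aux R L (fun v => -x v) (-b) (-a) δ y
      hR0 hL0 hδ hy hyR hyL hyδ
      (by simp only [neg_sub_neg]; linarith) (by simp only [neg_sub_neg]; linarith)
    refine ⟨u, w, hu, hw, hus, hws, ?_⟩
    simp only [neg_sub_neg, mul_neg, sum_neg_distrib] at hle
    linarith

theorem hsplit_nonneg {V E : Type*} [DecidableEq V] (e : E → Finset V) (δe : E → ℝ)
    (hδe : ∀ ε, 1 ≤ δe ε) (ε : E) (T : Finset V) : 0 ≤ hsplit e δe ε T :=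
  le_min (le_min (by positivity) (by positivity)) (by linarith [hδe ε])

theorem sum_inter_add_sum_sdiff' {V : Type*} [DecidableEq V] (s T : Finset V) (g : V → ℝ) :
    ∑ v ∈ s ∩ T, g v + ∑ v ∈ s \ T, g v = ∑ v ∈ s, g v := by
  rw [add_comm, ← sum_sdiff (inter_subset_left : s ∩ T ⊆ s), sdiff_inter_self_left]

theorem sum_edge_gflow_nonneg {V E : Type*} [DecidableEq V] (e : E → Finset V) (δe : E → ℝ)
    (hδe : ∀ ε, 1 ≤ δe ε) (ε : E) (x : V → ℝ) (a b : ℝ)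
    (hab : ∀ a' b' : ℝ, innerQ e δe ε x a b ≤ innerQ e δe ε x a' b') (T : Finset V)
    (hT : ∀ v ∈ T, ∀ u ∉ T, x u ≤ x v) :
    0 ≤ ∑ v ∈ e ε ∩ T, gflow x a b v ∧
      ∑ v ∈ e ε ∩ T, gflow x a b v + ∑ v ∈ e ε \ T, gflow x a b v = 0 := by
  have h0 : ∑ v ∈ e ε ∩ T, gflow x a b v + ∑ v ∈ e ε \ T, gflow x a b v = 0 := by
    rw [sum_inter_add_sum_sdiff']
    unfold gflow
    rw [sum_sub_distrib, innerQ_opt_a e δe hδe ε x a b hab, innerQ_opt_b e δe hδe ε x a b hab,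
      sub_self]
  exact ⟨sum_gflow_nonneg _ _ x a b
    (fun v hv u hu => hT v (mem_inter.1 hv).2 u (mem_sdiff.1 hu).2) h0, h0⟩

/-- Transport of a third of the splitting penalty across a hyperedge cut by a superlevel set. -/
theorem edge_transport {V E : Type*} [Fintype V] [DecidableEq V] (e : E → Finset V) (δe : E → ℝ)
    (hcard : ∀ ε, 2 ≤ (e ε).card) (hδe : ∀ ε, 1 ≤ δe ε) (ε : E) (x : V → ℝ) (a b : ℝ)
    (hab : ∀ a' b' : ℝ, innerQ e δe ε x a b ≤ innerQ e δe ε x a' b') (T : Finset V)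
    (hT : ∀ v ∈ T, ∀ u ∉ T, x u ≤ x v) :
    ∃ w u : V → ℝ, (∀ v, 0 ≤ w v ∧ w v ≤ if v ∈ e ε ∩ T then 1 else 0) ∧
      (∀ v, 0 ≤ u v ∧ u v ≤ if v ∈ e ε \ T then 1 else 0) ∧
      ∑ v, w v = hsplit e δe ε T / 3 ∧ ∑ v, u v = hsplit e δe ε T / 3 ∧
      ∑ v, w v * x v - ∑ v, u v * x v ≤ ∑ v ∈ e ε ∩ T, gflow x a b v := by
  obtain ⟨hflow, -⟩ := sum_edge_gflow_nonneg e δe hδe ε x a b hab T hT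
  have hδ := hδe ε
  by_cases hne : (e ε ∩ T).Nonempty ∧ (e ε \ T).Nonempty
  · have hba := innerQ_opt_le e δe hcard hδe ε x a b hab
    have ha := innerQ_opt_a e δe hδe ε x a b hab
    have hb := innerQ_opt_b e δe hδe ε x a b hab
    rw [max_eq_left (by linarith : 0 ≤ a - b), ← sum_inter_add_sum_sdiff' (e ε) T] at ha hb
    have h1 : hsplit e δe ε T ≤ (e ε ∩ T).card := (min_le_left _ _).trans (min_le_left _ _)
    have h2 : hsplit e δe ε T ≤ (e ε \ T).card := (min_le_left _ _).trans (min_le_right _ _)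
    have h3 : hsplit e δe ε T ≤ δe ε := min_le_right _ _
    have h4 := hsplit_nonneg e δe hδe ε T
    obtain ⟨w, u, hw, hu, hws, hus, hle⟩ := gadget_transport (e ε ∩ T) (e ε \ T) x a b (δe ε)
      (hsplit e δe ε T / 3) hne.1 hne.2
      (fun v hv u hu => hT v (mem_inter.1 hv).2 u (mem_sdiff.1 hu).2)
      (by linarith) (by linarith) (by linarith) (by linarith) (by linarith) hba ha hb
    refine ⟨fun v => if v ∈ e ε ∩ T then w v else 0, fun v => if v ∈ e ε \ T then u v else 0,
      fun v => ?_, fun v => ?_, ?_, ?_, ?_⟩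
    · dsimp only; split_ifs
      · exact hw v
      · simp
    · dsimp only; split_ifs
      · exact hu v
      · simp
    · rw [← sum_filter, filter_mem_eq_inter, univ_inter, hws]
    · rw [← sum_filter, filter_mem_eq_inter, univ_inter, hus]
    · simp only [ite_mul, zero_mul]
      rw [← sum_filter, ← sum_filter, filter_mem_eq_inter, filter_mem_eq_inter, univ_inter,
        univ_inter]
      exact hle
  · have h0 : hsplit e δe ε T = 0 := by
      refine le_antisymm ?_ (hsplit_nonneg e δe hδe ε T)
      rw [not_and_or, not_nonempty_iff_eq_empty, not_nonempty_iff_eq_empty] at hne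
      rcases hne with h | h
      · refine ((min_le_left _ _).trans (min_le_left _ _)).trans ?_
        simp [h]
      · refine ((min_le_left _ _).trans (min_le_right _ _)).trans ?_
        simp [h]
    refine ⟨fun _ => 0, fun _ => 0, fun v => ⟨le_rfl, by split_ifs <;> simp⟩,
      fun v => ⟨le_rfl, by split_ifs <;> simp⟩, by simp [h0], by simp [h0], by simpa using hflow⟩

/-! ### Degrees, cuts and aggregated transport -/

theorem hsplit_singleton {V E : Type*} [DecidableEq V] (e : E → Finset V) (δe : E → ℝ)
    (hcard : ∀ ε, 2 ≤ (e ε).card) (hδe : ∀ ε, 1 ≤ δe ε) (ε : E) (v : V) (hv : v ∈ e ε) :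
    hsplit e δe ε {v} = 1 := by
  unfold hsplit
  have h1 : (e ε ∩ {v}).card = 1 := by rw [inter_singleton_of_mem hv, card_singleton]
  have h2 : (1 : ℝ) ≤ (e ε \ {v}).card := by
    have h3 := card_sdiff_add_card_inter (e ε) {v}
    have := hcard ε
    exact_mod_cast (by omega : 1 ≤ (e ε \ {v}).card)
  rw [h1, Nat.cast_one, min_eq_left h2, min_eq_left (hδe ε)]

theorem hdeg_eq {V E : Type*} [Fintype E] [DecidableEq V] (e : E → Finset V) (δe : E → ℝ)
    (hcard : ∀ ε, 2 ≤ (e ε).card) (hδe : ∀ ε, 1 ≤ δe ε) (v : V) :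
    hdeg e δe v = ∑ ε, if v ∈ e ε then 1 else 0 := by
  unfold hdeg
  rw [sum_filter]
  exact sum_congr rfl fun ε _ => by
    split_ifs with h
    · exact hsplit_singleton e δe hcard hδe ε v h
    · rfl

theorem hdeg_pos {V E : Type*} [Fintype E] [DecidableEq V] (e : E → Finset V) (δe : E → ℝ)
    (hcard : ∀ ε, 2 ≤ (e ε).card) (hδe : ∀ ε, 1 ≤ δe ε) (hcov : ∀ v : V, ∃ ε, v ∈ e ε) (v : V) :
    0 < hdeg e δe v := by
  rw [hdeg_eq e δe hcard hδe]
  obtain ⟨ε, hε⟩ := hcov v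
  exact sum_pos' (fun ε _ => by split_ifs <;> simp) ⟨ε, mem_univ _, by simp [hε]⟩

/-- The cut is at most the volume of either side; in particular the conductance is at most `1` and
the recursion stays inside `[0, M]`. -/
theorem hcut_le {V E : Type*} [Fintype V] [Fintype E] [DecidableEq V] (e : E → Finset V)
    (δe : E → ℝ) (hcard : ∀ ε, 2 ≤ (e ε).card) (hδe : ∀ ε, 1 ≤ δe ε) (T : Finset V) :
    hcut e δe T ≤ min (hvol e δe T) (hM e δe - hvol e δe T) := by
  have hvol' : ∀ T : Finset V, hvol e δe T = ∑ ε, ((e ε ∩ T).card : ℝ) := fun T => by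
    unfold hvol
    rw [sum_congr rfl fun v _ => hdeg_eq e δe hcard hδe v, sum_comm]
    refine sum_congr rfl fun ε _ => ?_
    rw [← sum_filter, filter_mem_eq_inter, sum_const, nsmul_eq_mul, mul_one, inter_comm]
  have hcompl : hM e δe - hvol e δe T = ∑ ε, ((e ε \ T).card : ℝ) := by
    unfold hM
    rw [hvol', hvol', ← sum_sub_distrib]
    refine sum_congr rfl fun ε _ => ?_
    rw [inter_univ, ← card_sdiff_add_card_inter (e ε) T]
    push_cast
    ring
  refine le_min ?_ ?_
  · rw [hvol']
    exact sum_le_sum fun ε _ => (min_le_left _ _).trans (min_le_left _ _)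
  · rw [hcompl]
    exact sum_le_sum fun ε _ => (min_le_left _ _).trans (min_le_right _ _)

/-- Aggregated transport over all hyperedges: for a superlevel set `T`, the quantity `2 Σ_T d x`
minus the flow leaving `T` is at most the total `x`-value of two fractional vertex sets, one of
volume `vol T - cut T / 3` and one of volume `vol T + cut T / 3`. They arise from `T` by removing
the transported mass inside, respectively adding it outside. -/
theorem exists_fractional_sets {V E : Type*} [Fintype V] [Fintype E] [DecidableEq V]
    (e : E → Finset V) (δe : E → ℝ) (hcard : ∀ ε, 2 ≤ (e ε).card) (hδe : ∀ ε, 1 ≤ δe ε)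
    (x : V → ℝ) (a b : E → ℝ)
    (hab : ∀ ε a' b', innerQ e δe ε x (a ε) (b ε) ≤ innerQ e δe ε x a' b') (T : Finset V)
    (hT : ∀ v ∈ T, ∀ u ∉ T, x u ≤ x v) :
    ∃ z₁ z₂ : V → ℝ, (∀ v, 0 ≤ z₁ v ∧ z₁ v ≤ hdeg e δe v) ∧
      (∀ v, 0 ≤ z₂ v ∧ z₂ v ≤ hdeg e δe v) ∧
      ∑ v, z₁ v = hvol e δe T - hcut e δe T / 3 ∧ ∑ v, z₂ v = hvol e δe T + hcut e δe T / 3 ∧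
      2 * ∑ v ∈ T, hdeg e δe v * x v - ∑ ε, ∑ v ∈ e ε ∩ T, gflow x (a ε) (b ε) v
        ≤ ∑ v, z₁ v * x v + ∑ v, z₂ v * x v := by
  choose w u hw hu hws hus hle using fun ε => edge_transport e δe hcard hδe ε x (a ε) (b ε)
    (hab ε) T hT
  have hdT : ∀ v, (if v ∈ T then hdeg e δe v else 0) = ∑ ε, if v ∈ e ε ∩ T then 1 else 0 := by
    intro v
    rw [hdeg_eq e δe hcard hδe]
    by_cases h : v ∈ T <;> simp [h]
  have hdT' : ∀ v, hdeg e δe v - (if v ∈ T then hdeg e δe v else 0)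
      = ∑ ε, if v ∈ e ε \ T then 1 else 0 := by
    intro v
    rw [hdeg_eq e δe hcard hδe]
    by_cases h : v ∈ T <;> simp [h]
  have hwd : ∀ v, ∑ ε, w ε v ≤ if v ∈ T then hdeg e δe v else 0 := fun v => by
    rw [hdT]; exact sum_le_sum fun ε _ => (hw ε v).2
  have hud : ∀ v, ∑ ε, u ε v ≤ hdeg e δe v - (if v ∈ T then hdeg e δe v else 0) := fun v => by
    rw [hdT']; exact sum_le_sum fun ε _ => (hu ε v).2
  have hd0 : ∀ v, 0 ≤ hdeg e δe v := fun v => by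
    rw [hdeg_eq e δe hcard hδe]; exact sum_nonneg fun _ _ => by split_ifs <;> simp
  have hT0 : ∀ v, 0 ≤ (if v ∈ T then hdeg e δe v else 0) ∧
      (if v ∈ T then hdeg e δe v else 0) ≤ hdeg e δe v := fun v => by
    have := hd0 v
    split_ifs <;> constructor <;> linarith
  have hsT : ∀ g : V → ℝ, ∑ v, (if v ∈ T then hdeg e δe v else 0) * g v
      = ∑ v ∈ T, hdeg e δe v * g v := fun g => by
    simp only [ite_mul, zero_mul]
    rw [← sum_filter, filter_mem_eq_inter, univ_inter]
  have hsT1 : ∑ v, (if v ∈ T then hdeg e δe v else 0) = hvol e δe T := by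
    have := hsT (fun _ => 1)
    simpa only [mul_one, hvol] using this
  have hcut : hcut e δe T / 3 = ∑ ε, hsplit e δe ε T / 3 := by
    rw [hcut, sum_div]
  refine ⟨fun v => (if v ∈ T then hdeg e δe v else 0) - ∑ ε, w ε v,
    fun v => (if v ∈ T then hdeg e δe v else 0) + ∑ ε, u ε v,
    fun v => ⟨by linarith [hwd v], ?_⟩, fun v => ⟨?_, by linarith [hud v]⟩, ?_, ?_, ?_⟩
  · have : 0 ≤ ∑ ε, w ε v := sum_nonneg fun ε _ => (hw ε v).1
    linarith [(hT0 v).2]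
  · have : 0 ≤ ∑ ε, u ε v := sum_nonneg fun ε _ => (hu ε v).1
    linarith [(hT0 v).1]
  · rw [sum_sub_distrib, hsT1, sum_comm, sum_congr rfl fun ε _ => hws ε, ← hcut]
  · rw [sum_add_distrib, hsT1, sum_comm, sum_congr rfl fun ε _ => hus ε, ← hcut]
  · have h1 := sum_le_sum (s := univ) fun ε _ => hle ε
    simp only [sub_mul, add_mul, sum_sub_distrib, sum_add_distrib, hsT, sum_mul] at h1 ⊢
    rw [sum_comm (f := fun v ε => w ε v * x v), sum_comm (f := fun v ε => u ε v * x v)]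
    linarith

/-! ### The Lovász–Simonovits curve -/

theorem cumVol_zero {V : Type*} {n : ℕ} (σ : Fin n ≃ V) (d : V → ℝ) : cumVol σ d 0 = 0 := by
  simp [cumVol]

theorem cumVol_mono {V : Type*} {n : ℕ} (σ : Fin n ≃ V) (d : V → ℝ) (hd : ∀ v, 0 ≤ d v) :
    Monotone (cumVol σ d) := fun i j hij =>
  sum_le_sum_of_subset_of_nonneg
    (fun k hk => by simp only [mem_filter, mem_univ, true_and] at hk ⊢; omega) fun _ _ _ => hd _

theorem cumVol_succ {V : Type*} {n : ℕ} (σ : Fin n ≃ V) (d : V → ℝ) (i : Fin n) :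
    cumVol σ d ((i : ℕ) + 1) = cumVol σ d i + d (σ i) := by
  unfold cumVol
  have : univ.filter (fun k : Fin n => (k : ℕ) < (i : ℕ) + 1)
      = insert i (univ.filter (fun k : Fin n => (k : ℕ) < (i : ℕ))) := by
    ext k
    simp only [mem_filter, mem_univ, true_and, mem_insert, Fin.ext_iff]
    omega
  rw [this, sum_insert (by simp), add_comm]

theorem cumVol_full {V : Type*} [Fintype V] {n : ℕ} (σ : Fin n ≃ V) (d : V → ℝ) :
    cumVol σ d n = ∑ v, d v := by
  unfold cumVol
  rw [filter_true_of_mem fun i _ => i.2, Equiv.sum_comp σ d]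

theorem exists_cumVol_interval {V : Type*} {n : ℕ} (hn : 0 < n) (σ : Fin n ≃ V) (d : V → ℝ)
    (κ : ℝ) (h0 : 0 ≤ κ) (h1 : κ ≤ cumVol σ d n) :
    ∃ i : Fin n, cumVol σ d i ≤ κ ∧ κ ≤ cumVol σ d ((i : ℕ) + 1) := by
  by_contra! h
  have key : ∀ j, j ≤ n → cumVol σ d j ≤ κ := by
    intro j
    induction j with
    | zero => intro _; rw [cumVol_zero]; exact h0
    | succ j ih => intro hj; exact (h ⟨j, hj⟩ (ih (by omega))).le
  have h2 := h ⟨n - 1, by omega⟩ (key _ (by simp))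
  have h3 : n - 1 + 1 = n := by omega
  simp only [h3] at h2
  linarith

theorem sum_LS_increments {V : Type*} [Fintype V] {n : ℕ} (σ : Fin n ≃ V) (d : V → ℝ)
    (κ : ℝ) (h0 : 0 ≤ κ) (h1 : κ ≤ cumVol σ d n) :
    ∑ i : Fin n, (min κ (cumVol σ d ((i : ℕ) + 1)) - min κ (cumVol σ d (i : ℕ))) = κ := by
  rw [Fin.sum_univ_eq_sum_range
    (fun i => min κ (cumVol σ d (i + 1)) - min κ (cumVol σ d i)) n,
    sum_range_sub (fun i => min κ (cumVol σ d i)), cumVol_zero, min_eq_left h1, min_eq_right h0,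
    sub_zero]

theorem LS_increment_mem {V : Type*} {n : ℕ} (σ : Fin n ≃ V) (d : V → ℝ) (hd : ∀ v, 0 ≤ d v)
    (κ : ℝ) (i : Fin n) :
    0 ≤ min κ (cumVol σ d ((i : ℕ) + 1)) - min κ (cumVol σ d (i : ℕ)) ∧
      min κ (cumVol σ d ((i : ℕ) + 1)) - min κ (cumVol σ d (i : ℕ)) ≤ d (σ i) := by
  have h := cumVol_succ σ d i
  have := hd (σ i)
  rcases min_cases κ (cumVol σ d ((i : ℕ) + 1)) with h1 | h1 <;>
  rcases min_cases κ (cumVol σ d (i : ℕ)) with h2 | h2 <;> constructor <;> linarith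

/-- Extremality of the Lovász–Simonovits curve: it dominates the `x`-value of every fractional
vertex set of the same volume. -/
theorem le_LScurve {V : Type*} [Fintype V] {n : ℕ} (hn : 0 < n) (σ : Fin n ≃ V) (d x : V → ℝ)
    (hd : ∀ v, 0 ≤ d v) (hσ : ∀ i j : Fin n, i ≤ j → x (σ j) ≤ x (σ i))
    (z : V → ℝ) (hz : ∀ v, 0 ≤ z v ∧ z v ≤ d v) (κ : ℝ) (hκ : ∑ v, z v = κ) :
    ∑ v, z v * x v ≤ LScurve σ d x κ := by
  have h0 : 0 ≤ κ := hκ ▸ sum_nonneg fun v _ => (hz v).1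
  have h1 : κ ≤ cumVol σ d n := by
    rw [cumVol_full, ← hκ]; exact sum_le_sum fun v _ => (hz v).2
  obtain ⟨i, hi1, hi2⟩ := exists_cumVol_interval hn σ d κ h0 h1
  have hm := cumVol_mono σ d hd
  have hsum := sum_LS_increments σ d κ h0 h1
  have hzs : ∑ j, z (σ j) = κ := by rw [Equiv.sum_comp σ z, hκ]
  -- The greedy filling exceeds `z` only where `x ≥ x (σ i)` and falls short only where
  -- `x ≤ x (σ i)`, with `i` the vertex at which volume `κ` is reached.
  have key : 0 ≤ ∑ j : Fin n, (x (σ j) - x (σ i)) *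
      ((min κ (cumVol σ d ((j : ℕ) + 1)) - min κ (cumVol σ d (j : ℕ))) - z (σ j)) := by
    refine sum_nonneg fun j _ => ?_
    rcases lt_trichotomy j i with hj | rfl | hj
    · have hji : (j : ℕ) + 1 ≤ i := hj
      rw [min_eq_right ((hm hji).trans hi1), min_eq_right ((hm (by omega : (j : ℕ) ≤ i)).trans hi1),
        cumVol_succ]
      exact mul_nonneg (by linarith [hσ j i hj.le]) (by linarith [(hz (σ j)).2])
    · simp
    · have hji : (i : ℕ) + 1 ≤ j := hj
      rw [min_eq_left (hi2.trans (hm hji)),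
        min_eq_left (hi2.trans (hm (by omega : (i : ℕ) + 1 ≤ (j : ℕ) + 1)))]
      exact mul_nonneg_of_nonpos_of_nonpos (by linarith [hσ i j hj.le])
        (by linarith [(hz (σ j)).1])
  have e1 : ∑ j : Fin n, (x (σ j) - x (σ i)) *
      ((min κ (cumVol σ d ((j : ℕ) + 1)) - min κ (cumVol σ d (j : ℕ))) - z (σ j))
      = LScurve σ d x κ - ∑ v, z v * x v := by
    have e2 : ∑ v, z v * x v = ∑ j, z (σ j) * x (σ j) :=
      (Equiv.sum_comp σ fun v => z v * x v).symm
    rw [e2]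
    unfold LScurve
    have e3 : x (σ i) * (∑ j : Fin n, (min κ (cumVol σ d ((j : ℕ) + 1))
        - min κ (cumVol σ d (j : ℕ))) - ∑ j, z (σ j)) = 0 := by
      rw [hsum, hzs, sub_self, mul_zero]
    rw [← sub_zero (∑ j : Fin n, x (σ j) * _ - _), ← e3, ← sum_sub_distrib, ← sum_sub_distrib,
      mul_sum, ← sum_sub_distrib]
    exact sum_congr rfl fun j _ => by ring
  linarith

theorem LScurve_cumVol {V : Type*} {n : ℕ} (σ : Fin n ≃ V) (d x : V → ℝ)
    (hd : ∀ v, 0 ≤ d v) (j : ℕ) :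
    LScurve σ d x (cumVol σ d j)
      = ∑ i ∈ univ.filter (fun i : Fin n => (i : ℕ) < j), d (σ i) * x (σ i) := by
  have hm := cumVol_mono σ d hd
  unfold LScurve
  rw [sum_filter]
  refine sum_congr rfl fun i _ => ?_
  split_ifs with h
  · rw [min_eq_right (hm h), min_eq_right (hm h.le), cumVol_succ]
    ring
  · push Not at h
    rw [min_eq_left (hm h), min_eq_left (hm (by omega : j ≤ (i : ℕ) + 1))]
    ring

/-- The curve is affine between consecutive breakpoints, so a concave function dominating it at
the breakpoints dominates it everywhere. -/
theorem LScurve_le_of_concave {V : Type*} {n : ℕ} (hn : 0 < n) (σ : Fin n ≃ V) (d x : V → ℝ)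
    (hd : ∀ v, 0 < d v) (g : ℝ → ℝ) (hg : ConcaveOn ℝ (Set.Icc 0 (cumVol σ d n)) g)
    (hle : ∀ j, j ≤ n → LScurve σ d x (cumVol σ d j) ≤ g (cumVol σ d j))
    (κ : ℝ) (hκ : κ ∈ Set.Icc 0 (cumVol σ d n)) : LScurve σ d x κ ≤ g κ := by
  obtain ⟨i, hi1, hi2⟩ := exists_cumVol_interval hn σ d κ hκ.1 hκ.2
  have hd0 : ∀ v, 0 ≤ d v := fun v => (hd v).le
  have hm := cumVol_mono σ d hd0
  have hs := cumVol_succ σ d i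
  have hdi := hd (σ i)
  have hmem : ∀ j, j ≤ n → cumVol σ d j ∈ Set.Icc 0 (cumVol σ d n) := fun j hj =>
    ⟨by rw [← cumVol_zero σ d]; exact hm (Nat.zero_le j), hm hj⟩
  set p := cumVol σ d i with hp
  set q := cumVol σ d ((i : ℕ) + 1) with hq
  set l := (κ - p) / d (σ i) with hl
  have hl0 : 0 ≤ l := div_nonneg (by linarith) hdi.le
  have hl1 : l ≤ 1 := by rw [hl, div_le_one hdi]; linarith
  have hκl : κ = (1 - l) * p + l * q := by
    rw [hs, hl]; field_simp; ring
  have hmin : ∀ m : ℕ, min κ (cumVol σ d m)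
      = (1 - l) * min p (cumVol σ d m) + l * min q (cumVol σ d m) := by
    intro m
    rcases Nat.lt_or_ge (i : ℕ) m with h | h
    · have h1 : q ≤ cumVol σ d m := hm h
      rw [min_eq_left (hi2.trans h1), min_eq_left h1, min_eq_left (by linarith), hκl]
    · have h1 : cumVol σ d m ≤ p := hm h
      rw [min_eq_right (h1.trans hi1), min_eq_right h1, min_eq_right (by linarith)]
      ring
  have hI : LScurve σ d x κ = (1 - l) * LScurve σ d x p + l * LScurve σ d x q := by
    unfold LScurve
    rw [mul_sum, mul_sum, ← sum_add_distrib]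
    refine sum_congr rfl fun j _ => ?_
    rw [hmin, hmin]
    ring
  have hc := hg.2 (hmem i i.2.le) (hmem (i + 1) i.2) (by linarith : 0 ≤ 1 - l) hl0 (by ring)
  simp only [smul_eq_mul] at hc
  rw [← hp, ← hq, ← hκl] at hc
  have h1 := mul_le_mul_of_nonneg_left (hle i i.2.le) (by linarith : 0 ≤ 1 - l)
  have h2 := mul_le_mul_of_nonneg_left (hle (i + 1) i.2) hl0
  rw [hI]
  linarith

theorem sum_sweepSet {V : Type*} [DecidableEq V] {n : ℕ} (σ : Fin n ≃ V) (g : V → ℝ) (j : ℕ) :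
    ∑ v ∈ sweepSet σ j, g v = ∑ i ∈ univ.filter (fun i : Fin n => (i : ℕ) < j), g (σ i) :=
  sum_image fun _ _ _ _ h => σ.injective h

theorem sweepSet_superlevel {V : Type*} [DecidableEq V] {n : ℕ} (σ : Fin n ≃ V) (x : V → ℝ)
    (hσ : ∀ i j : Fin n, i ≤ j → x (σ j) ≤ x (σ i)) (j : ℕ) :
    ∀ v ∈ sweepSet σ j, ∀ u ∉ sweepSet σ j, x u ≤ x v := by
  intro v hv u hu
  simp only [sweepSet, mem_image, mem_filter, mem_univ, true_and, not_exists, not_and] at hv hu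
  obtain ⟨i, hi, rfl⟩ := hv
  obtain ⟨k, rfl⟩ := σ.surjective u
  have hk : ¬ (k : ℕ) < j := fun h => hu k h rfl
  exact hσ i k (by rw [Fin.le_def]; omega)

/-! ### Estimates for the square root term -/

theorem concaveOn_sqrt_min (M D : ℝ) (hD : 0 < D) :
    ConcaveOn ℝ (Set.Icc 0 M) fun κ => Real.sqrt (min κ (M - κ) / D) := by
  have h1 : ConcaveOn ℝ (Set.Icc 0 M) fun κ : ℝ => min κ (M - κ) / D := by
    have h2 : ConcaveOn ℝ (Set.Icc 0 M) fun κ : ℝ => κ := concaveOn_id (convex_Icc _ _)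
    have h3 : ConcaveOn ℝ (Set.Icc 0 M) fun κ : ℝ => M - κ :=
      (concaveOn_const M (convex_Icc _ _)).sub (convexOn_id (convex_Icc _ _))
    have h4 := (h2.inf h3).smul (inv_nonneg.2 hD.le)
    refine h4.congr fun κ _ => ?_
    simp only [smul_eq_mul, Pi.inf_apply]
    rw [div_eq_inv_mul]
  refine ⟨convex_Icc _ _, fun p hp q hq s t hs ht hst => ?_⟩
  have h5 := h1.2 hp hq hs ht hst
  have hnn : ∀ r ∈ Set.Icc (0 : ℝ) M, 0 ≤ min r (M - r) / D := fun r hr =>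
    div_nonneg (le_min hr.1 (by linarith [hr.2])) hD.le
  have h6 := Real.strictConcaveOn_sqrt.concaveOn.2 (hnn p hp) (hnn q hq) hs ht hst
  exact h6.trans (Real.sqrt_le_sqrt h5)

/-- Contraction estimate: moving from `m` by `y ≥ z m` in both directions costs the average of
the square roots a factor `1 - z² / 8`. -/
theorem sqrt_add_sqrt_le (m y z : ℝ) (hz : 0 ≤ z) (hz1 : z ≤ 1) (hm : 0 ≤ m) (hy : z * m ≤ y)
    (hym : y ≤ m) :
    Real.sqrt (m - y) + Real.sqrt (m + y) ≤ 2 * Real.sqrt m * (1 - z ^ 2 / 8) := by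
  have hy0 : 0 ≤ y := le_trans (mul_nonneg hz hm) hy
  have hz2 : z ^ 2 ≤ 1 := pow_le_one₀ hz hz1
  refine abs_le_of_sq_le_sq' ?_ (mul_nonneg (by positivity) (by linarith)) |>.2
  have h1 := Real.sq_sqrt (by linarith : 0 ≤ m - y)
  have h2 := Real.sq_sqrt (by linarith : 0 ≤ m + y)
  have h3 := Real.sq_sqrt hm
  have h4 : Real.sqrt (m - y) * Real.sqrt (m + y) ≤ m * (1 - z ^ 2 / 2) := by
    rw [← Real.sqrt_mul (by linarith)]
    refine Real.sqrt_le_iff.2 ⟨mul_nonneg hm (by linarith), ?_⟩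
    have h5 : (z * m) ^ 2 ≤ y ^ 2 := pow_le_pow_left₀ (by positivity) hy 2
    nlinarith [sq_nonneg (m * z ^ 2)]
  have e1 : (2 * Real.sqrt m * (1 - z ^ 2 / 8)) ^ 2 = 4 * m * (1 - z ^ 2 / 8) ^ 2 := by
    rw [mul_pow, mul_pow, h3]; ring
  rw [e1]
  nlinarith [mul_nonneg hm (sq_nonneg (z ^ 2))]

/-- `sqrt_add_sqrt_le` for the symmetric profile `min {k, M - k} / D`. -/
theorem sqrt_shift_le (k M D y z : ℝ) (hD : 0 < D) (hz : 0 ≤ z) (hz1 : z ≤ 1)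
    (hm : 0 ≤ min k (M - k)) (hy : z * min k (M - k) ≤ y) (hym : y ≤ min k (M - k)) :
    Real.sqrt (min (k - y) (M - (k - y)) / D) + Real.sqrt (min (k + y) (M - (k + y)) / D)
      ≤ 2 * Real.sqrt (min k (M - k) / D) * (1 - z ^ 2 / 8) := by
  set m := min k (M - k) with hmdef
  have hbase := sqrt_add_sqrt_le (m / D) (y / D) z hz hz1 (by positivity)
    (by rw [← mul_div_assoc]; gcongr) (by gcongr)
  rw [← sub_div, ← add_div] at hbase
  have hmk : m ≤ k := min_le_left _ _
  have hmk' : m ≤ M - k := min_le_right _ _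
  rcases min_cases k (M - k) with ⟨h, _⟩ | ⟨h, _⟩
  · have h1 : Real.sqrt (min (k - y) (M - (k - y)) / D) ≤ Real.sqrt ((m - y) / D) := by
      gcongr; exact (min_le_left _ _).trans (by linarith)
    have h2 : Real.sqrt (min (k + y) (M - (k + y)) / D) ≤ Real.sqrt ((m + y) / D) := by
      gcongr; exact (min_le_left _ _).trans (by linarith)
    linarith
  · have h1 : Real.sqrt (min (k - y) (M - (k - y)) / D) ≤ Real.sqrt ((m + y) / D) := by
      gcongr; exact (min_le_right _ _).trans (by linarith)
    have h2 : Real.sqrt (min (k + y) (M - (k + y)) / D) ≤ Real.sqrt ((m - y) / D) := by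
      gcongr; exact (min_le_right _ _).trans (by linarith)
    linarith

/-- The induction start: a curve bounded by `1` and by `κ / D` satisfies the bound for `t = 0`. -/
theorem base_bound (I κ M D : ℝ) (hD : 0 < D) (hDM : D ≤ M) (hκ0 : 0 ≤ κ) (hκM : κ ≤ M)
    (h1 : I ≤ 1) (h2 : I ≤ κ / D) : I ≤ κ / M + Real.sqrt (min κ (M - κ) / D) := by
  have hM : 0 < M := hD.trans_le hDM
  have hself : ∀ r : ℝ, 0 ≤ r → min r 1 ≤ Real.sqrt r := fun r hr => by
    refine Real.le_sqrt_of_sq_le ?_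
    rcases min_cases r 1 with ⟨h, h'⟩ | ⟨h, h'⟩ <;> rw [h] <;> nlinarith
  have hk : 0 ≤ κ / M := by positivity
  rcases min_cases κ (M - κ) with ⟨h, _⟩ | ⟨h, _⟩ <;> rw [h]
  · have := hself (κ / D) (by positivity)
    have h3 : I ≤ min (κ / D) 1 := le_min h2 h1
    linarith
  · have h3 : 0 ≤ (M - κ) / D := div_nonneg (by linarith) hD.le
    have h4 := hself _ h3
    have h5 : 1 - κ / M ≤ min ((M - κ) / D) 1 := by
      refine le_min ?_ (by linarith)
      have : 1 - κ / M = (M - κ) / M := by field_simp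
      rw [this]
      exact div_le_div_of_nonneg_left (by linarith) hD hDM
    linarith

/-! ### The minimizer and its recursion -/

/-- The minimizer has total mass one and values between `0` and `1 / vol S`. -/
theorem minimizer_range {V E : Type*} [Fintype V] [Fintype E] [DecidableEq V]
    (e : E → Finset V) (δe : E → ℝ) (hδe : ∀ ε, 1 ≤ δe ε)
    (hd : ∀ v, 0 < hdeg e δe v) (γ : ℝ) (hγ : 0 < γ) (S : Finset V) (hS0 : 0 < hvol e δe S)
    (x : V → ℝ) (hx : ∀ y : V → ℝ, Qobj e δe γ S x ≤ Qobj e δe γ S y)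
    (a b : E → ℝ)
    (hab : ∀ ε a' b', innerQ e δe ε x (a ε) (b ε) ≤ innerQ e δe ε x a' b') :
    (∀ v, 0 ≤ x v) ∧ (∀ v, x v ≤ 1 / hvol e δe S) ∧ ∑ v, hdeg e δe v * x v = 1 := by
  have hstat := Qobj_stationary e δe hδe (fun v => (hd v).le) γ hγ S x hx a b hab
  refine ⟨fun v => ?_, fun v => ?_, ?_⟩
  -- If `x` took negative values, flow would enter the set of those vertices, against the balance.
  · by_contra! hv
    set T := univ.filter (fun v => 0 ≤ x v)
    have hT : ∀ v ∈ T, ∀ u ∉ T, x u ≤ x v := fun v hv u hu => by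
      simp only [T, mem_filter, mem_univ, true_and, not_le] at hv hu
      linarith
    have h1 := hstat Tᶜ
    have h2 : ∑ ε, ∑ v ∈ e ε ∩ Tᶜ, gflow x (a ε) (b ε) v ≤ 0 := sum_nonpos fun ε _ => by
      have := sum_edge_gflow_nonneg e δe hδe ε x (a ε) (b ε) (hab ε) T hT
      rw [sdiff_eq_inter_compl] at this
      linarith [this.1, this.2]
    have h3 : ∑ v ∈ Tᶜ, hdeg e δe v * (x v - (if v ∈ S then 1 else 0) / hvol e δe S) < 0 := by
      refine sum_neg (fun w hw => mul_neg_of_pos_of_neg (hd w) ?_)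
        ⟨v, by simpa [T] using hv⟩
      have hw' : x w < 0 := by simpa [T] using hw
      have : 0 ≤ (if w ∈ S then (1 : ℝ) else 0) / hvol e δe S :=
        div_nonneg (by split_ifs <;> simp) hS0.le
      linarith
    nlinarith
  · by_contra! hv
    set T := univ.filter (fun v => 1 / hvol e δe S < x v)
    have hT : ∀ v ∈ T, ∀ u ∉ T, x u ≤ x v := fun v hv u hu => by
      simp only [T, mem_filter, mem_univ, true_and, not_lt] at hv hu
      linarith
    have h1 := hstat T
    have h2 : 0 ≤ ∑ ε, ∑ v ∈ e ε ∩ T, gflow x (a ε) (b ε) v := sum_nonneg fun ε _ =>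
      (sum_edge_gflow_nonneg e δe hδe ε x (a ε) (b ε) (hab ε) T hT).1
    have h3 : 0 < ∑ v ∈ T, hdeg e δe v * (x v - (if v ∈ S then 1 else 0) / hvol e δe S) := by
      refine sum_pos (fun w hw => mul_pos (hd w) ?_) ⟨v, by simpa [T] using hv⟩
      have hw' : 1 / hvol e δe S < x w := (mem_filter.1 hw).2
      have : (if w ∈ S then (1 : ℝ) else 0) / hvol e δe S ≤ 1 / hvol e δe S := by
        gcongr; split_ifs <;> simp
      linarith
    nlinarith
  · have h1 := hstat univ
    have h2 : ∑ ε, ∑ v ∈ e ε ∩ univ, gflow x (a ε) (b ε) v = 0 := sum_eq_zero fun ε _ => by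
      have := (sum_edge_gflow_nonneg e δe hδe ε x (a ε) (b ε) (hab ε) univ (by simp)).2
      rwa [sdiff_eq_empty_iff_subset.2 (subset_univ _), sum_empty, add_zero] at this
    rw [h2, add_zero] at h1
    have h3 := (mul_eq_zero.1 h1).resolve_left hγ.ne'
    simp only [mul_sub, sum_sub_distrib] at h3
    have h4 : ∑ v, hdeg e δe v * ((if v ∈ S then 1 else 0) / hvol e δe S) = 1 := by
      have : ∀ v, hdeg e δe v * ((if v ∈ S then 1 else 0) / hvol e δe S)
          = (if v ∈ S then hdeg e δe v else 0) / hvol e δe S := fun v => by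
        split_ifs <;> ring
      rw [sum_congr rfl fun v _ => this v, ← sum_div, ← sum_filter, filter_mem_eq_inter,
        univ_inter]
      exact div_self hS0.ne'
    linarith

/-- The Lovász–Simonovits recursion at the breakpoint of a sweep set. -/
theorem LS_recursion {V E : Type*} [Fintype V] [Fintype E] [DecidableEq V]
    (e : E → Finset V) (δe : E → ℝ) (hcard : ∀ ε, 2 ≤ (e ε).card) (hδe : ∀ ε, 1 ≤ δe ε)
    (hd : ∀ v, 0 < hdeg e δe v) (γ : ℝ) (hγ : 0 < γ) (S : Finset V) (hS0 : 0 < hvol e δe S)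
    (x : V → ℝ) (hx : ∀ y : V → ℝ, Qobj e δe γ S x ≤ Qobj e δe γ S y)
    (a b : E → ℝ)
    (hab : ∀ ε a' b', innerQ e δe ε x (a ε) (b ε) ≤ innerQ e δe ε x a' b')
    (σ : Fin (Fintype.card V) ≃ V) (hn : 0 < Fintype.card V)
    (hσ : ∀ i j : Fin (Fintype.card V), i ≤ j → x (σ j) ≤ x (σ i)) (j : ℕ) :
    (2 + γ) * LScurve σ (hdeg e δe) x (hvol e δe (sweepSet σ j)) ≤
      γ + LScurve σ (hdeg e δe) x (hvol e δe (sweepSet σ j) - hcut e δe (sweepSet σ j) / 3)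
        + LScurve σ (hdeg e δe) x (hvol e δe (sweepSet σ j) + hcut e δe (sweepSet σ j) / 3) := by
  have hd0 : ∀ v, 0 ≤ hdeg e δe v := fun v => (hd v).le
  set T := sweepSet σ j with hTdef
  obtain ⟨z₁, z₂, hz1, hz2, hs1, hs2, hle⟩ := exists_fractional_sets e δe hcard hδe x a b hab T
    (sweepSet_superlevel σ x hσ j)
  have hI1 := le_LScurve hn σ (hdeg e δe) x hd0 hσ z₁ hz1 _ hs1
  have hI2 := le_LScurve hn σ (hdeg e δe) x hd0 hσ z₂ hz2 _ hs2
  have hI : LScurve σ (hdeg e δe) x (hvol e δe T) = ∑ v ∈ T, hdeg e δe v * x v := by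
    have h1 : hvol e δe T = cumVol σ (hdeg e δe) j := sum_sweepSet σ _ j
    rw [h1, LScurve_cumVol σ _ x hd0, hTdef, sum_sweepSet σ (fun v => hdeg e δe v * x v)]
  have hstat := Qobj_stationary e δe hδe hd0 γ hγ S x hx a b hab T
  have hseed : ∑ v ∈ T, hdeg e δe v * ((if v ∈ S then 1 else 0) / hvol e δe S) ≤ 1 := by
    have : ∀ v, hdeg e δe v * ((if v ∈ S then 1 else 0) / hvol e δe S)
        = (if v ∈ S then hdeg e δe v else 0) / hvol e δe S := fun v => by
      split_ifs <;> ring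
    rw [sum_congr rfl fun v _ => this v, ← sum_div, ← sum_filter, filter_mem_eq_inter,
      div_le_one hS0]
    exact sum_le_sum_of_subset_of_nonneg inter_subset_right fun v _ _ => hd0 v
  simp only [mul_sub, sum_sub_distrib] at hstat
  have := mul_le_mul_of_nonneg_left hseed hγ.le
  rw [hI]
  linarith

/-- The edge constant `σ_x = (2 δ̄ + 1)⁻¹` is at most `1 / 3` whenever the boundary is nonempty,
because every hyperedge has `min {δ, |e| / 2} ≥ 1`; if the boundary is empty, the conductance is
zero. Either way `σ_x φ_x ≤ φ_x / 3`. -/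
theorem edge_const_mul_cond_le {V E : Type*} [Fintype V] [Fintype E] [DecidableEq V]
    (e : E → Finset V) (δe : E → ℝ) (hcard : ∀ ε, 2 ≤ (e ε).card) (hδe : ∀ ε, 1 ≤ δe ε)
    (T : Finset V) (hT0 : 0 < hvol e δe T) (hTM : hvol e δe T < hM e δe) :
    0 ≤ (2 * deltaBar e δe T + 1)⁻¹ * hcond e δe T ∧
      (2 * deltaBar e δe T + 1)⁻¹ * hcond e δe T ≤ hcond e δe T / 3 ∧ hcond e δe T ≤ 1 := by
  have hm : 0 < min (hvol e δe T) (hM e δe - hvol e δe T) := lt_min hT0 (by linarith)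
  have hcut0 : 0 ≤ hcut e δe T := sum_nonneg fun ε _ => hsplit_nonneg e δe hδe ε T
  have hc0 : 0 ≤ hcond e δe T := div_nonneg hcut0 hm.le
  have hc1 : hcond e δe T ≤ 1 := (div_le_one hm).2 (hcut_le e δe hcard hδe T)
  by_cases hb : (hbdry e T).Nonempty
  · obtain ⟨ε, hε⟩ := hb
    have h1 : 1 ≤ deltaBar e δe T := by
      have h2 : min (δe ε) (((e ε).card : ℝ) / 2) ≤ deltaBar e δe T :=
        le_csSup ((Set.toFinite _).bddAbove) ⟨ε, hε, rfl⟩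
      refine le_trans (le_min (hδe ε) ?_) h2
      have : (2 : ℝ) ≤ (e ε).card := by exact_mod_cast hcard ε
      linarith
    have h3 : (2 * deltaBar e δe T + 1)⁻¹ ≤ 3⁻¹ := inv_anti₀ (by norm_num) (by linarith)
    have h4 : 0 ≤ (2 * deltaBar e δe T + 1)⁻¹ := inv_nonneg.2 (by linarith)
    refine ⟨by positivity, ?_, hc1⟩
    have := mul_le_mul_of_nonneg_right h3 hc0
    linarith
  · have h0 : hcut e δe T = 0 := by
      refine sum_eq_zero fun ε _ => le_antisymm ?_ (hsplit_nonneg e δe hδe ε T)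
      have hne : ¬ ((e ε ∩ T).Nonempty ∧ (e ε \ T).Nonempty) := fun h => hb ⟨ε, h⟩
      rw [not_and_or, not_nonempty_iff_eq_empty, not_nonempty_iff_eq_empty] at hne
      rcases hne with h | h
      · refine ((min_le_left _ _).trans (min_le_left _ _)).trans ?_
        simp [h]
      · refine ((min_le_left _ _).trans (min_le_right _ _)).trans ?_
        simp [h]
    have : hcond e δe T = 0 := by rw [hcond, h0, zero_div]
    rw [this]
    norm_num

/-! ### The upper bound -/

open Finset in
/-- Lovász–Simonovits upper bound (Lemma `lm:up`): for the minimizer `x = x(γ,S)` of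
the diffusion objective and any sweep-cut-optimal set `S_{j*}` (with sweep-cut
conductance `φ_x` and `σ_x = (2 δ̄(S_{j*}) + 1)⁻¹`), for every integer `t > 0` and every
`k ∈ [0,M]`,
`I_x(k) ≤ k/M + γt/(2+γ) + sqrt(min(k, M−k)/min_{i∈S} d_i) (1 − σ_x² φ_x²/8)^t`. -/
theorem ls_upper_bound {V E : Type*} [Fintype V] [Fintype E] [DecidableEq V]
    (e : E → Finset V) (δe : E → ℝ)
    (hcard : ∀ ε, 2 ≤ (e ε).card) (hδe : ∀ ε, 1 ≤ δe ε)
    (hcov : ∀ v : V, ∃ ε, v ∈ e ε)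
    (γ : ℝ) (hγ : 0 < γ)
    (S : Finset V) (hS0 : 0 < hvol e δe S)
    (x : V → ℝ) (hx : ∀ y : V → ℝ, Qobj e δe γ S x ≤ Qobj e δe γ S y)
    (σ : Fin (Fintype.card V) ≃ V)
    (hσ : ∀ i j : Fin (Fintype.card V), i ≤ j → x (σ j) ≤ x (σ i))
    (jx : ℕ) (hjx : jx ≤ Fintype.card V)
    (hjx0 : 0 < hvol e δe (sweepSet σ jx))
    (hjxM : hvol e δe (sweepSet σ jx) < hM e δe)
    (hjmin : ∀ j : ℕ, j ≤ Fintype.card V → 0 < hvol e δe (sweepSet σ j) →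
      hvol e δe (sweepSet σ j) < hM e δe →
      hcond e δe (sweepSet σ jx) ≤ hcond e δe (sweepSet σ j))
    (t : ℕ) (ht : 0 < t) (k : ℝ) (hk : k ∈ Set.Icc 0 (hM e δe)) :
    LScurve σ (hdeg e δe) x k ≤
      k / hM e δe + γ * t / (2 + γ) +
        Real.sqrt (min k (hM e δe - k) / sInf (hdeg e δe '' (S : Set V))) *
          (1 - ((2 * deltaBar e δe (sweepSet σ jx) + 1)⁻¹) ^ 2 *
              (hcond e δe (sweepSet σ jx)) ^ 2 / 8) ^ t := by
  have hd := hdeg_pos e δe hcard hδe hcov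
  have hd0 : ∀ v, 0 ≤ hdeg e δe v := fun v => (hd v).le
  have hSne : S.Nonempty := by
    by_contra! h
    simp [h, hvol] at hS0
  have hn : 0 < Fintype.card V := Fintype.card_pos_iff.2 ⟨hSne.choose⟩
  choose a b hab using fun ε => exists_innerQ_min e δe hcard hδe ε x
  obtain ⟨hx0, hx1, hxs⟩ := minimizer_range e δe hδe hd γ hγ S hS0 x hx a b hab
  -- the smallest degree over the seed set
  obtain ⟨D, hD⟩ : ∃ D, D = sInf (hdeg e δe '' (S : Set V)) := ⟨_, rfl⟩
  obtain ⟨s, hs, hsD⟩ : D ∈ hdeg e δe '' (S : Set V) := by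
    rw [hD]
    exact Set.Nonempty.csInf_mem (hSne.to_set.image _) (Set.toFinite _)
  have hDpos : 0 < D := hsD ▸ hd s
  have hDS : D ≤ hvol e δe S := by
    rw [← hsD]; exact single_le_sum (fun v _ => hd0 v) hs
  have hSM : hvol e δe S ≤ hM e δe :=
    sum_le_sum_of_subset_of_nonneg (subset_univ S) fun v _ _ => hd0 v
  have hDM := hDS.trans hSM
  have hMpos : 0 < hM e δe := hDpos.trans_le hDM
  have hfull : cumVol σ (hdeg e δe) (Fintype.card V) = hM e δe := cumVol_full σ _
  rw [← hD]
  obtain ⟨hz0, hz3, hφ1⟩ := edge_const_mul_cond_le e δe hcard hδe (sweepSet σ jx) hjx0 hjxM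
  rw [← mul_pow]
  set φ := hcond e δe (sweepSet σ jx)
  set z := (2 * deltaBar e δe (sweepSet σ jx) + 1)⁻¹ * φ
  have hz1 : z ≤ 1 := by linarith
  set ρ := 1 - z ^ 2 / 8 with hρ
  have hρ0 : 0 ≤ ρ := by
    have := pow_le_one₀ hz0 hz1 (n := 2); linarith
  set I := LScurve σ (hdeg e δe) x with hI
  have hinc := LS_increment_mem σ (hdeg e δe) hd0
  have hI1 : ∀ κ, I κ ≤ 1 := fun κ => by
    rw [← hxs, ← Equiv.sum_comp σ]
    refine sum_le_sum fun i _ => ?_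
    rw [mul_comm]
    exact mul_le_mul_of_nonneg_right (hinc κ i).2 (hx0 _)
  have hID : ∀ κ ∈ Set.Icc 0 (hM e δe), I κ ≤ κ / D := fun κ hκ => by
    have h1 : I κ ≤ ∑ i : Fin (Fintype.card V), 1 / D *
        (min κ (cumVol σ (hdeg e δe) ((i : ℕ) + 1)) - min κ (cumVol σ (hdeg e δe) (i : ℕ))) := by
      refine sum_le_sum fun i _ => mul_le_mul_of_nonneg_right ?_ (hinc κ i).1
      exact (hx1 _).trans (one_div_le_one_div_of_le hDpos hDS)
    rw [← mul_sum, sum_LS_increments σ _ κ hκ.1 (by rw [hfull]; exact hκ.2)] at h1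
    rwa [div_eq_inv_mul, ← one_div]
  have main : ∀ t : ℕ, ∀ κ ∈ Set.Icc 0 (hM e δe), I κ ≤ κ / hM e δe + γ * t / (2 + γ) +
      Real.sqrt (min κ (hM e δe - κ) / D) * ρ ^ t := by
    intro t
    induction t with
    | zero =>
      intro κ hκ
      have := base_bound (I κ) κ (hM e δe) D hDpos hDM hκ.1 hκ.2 (hI1 κ) (hID κ hκ)
      simpa using this
    | succ t ih =>
      have hconc : ConcaveOn ℝ (Set.Icc 0 (cumVol σ (hdeg e δe) (Fintype.card V)))
          fun κ => κ / hM e δe + γ * (t + 1 : ℕ) / (2 + γ) +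
            Real.sqrt (min κ (hM e δe - κ) / D) * ρ ^ (t + 1) := by
        rw [hfull]
        refine ConcaveOn.add (ConcaveOn.add_const ?_ _) ?_
        · refine ((concaveOn_id (convex_Icc _ _)).smul (inv_nonneg.2 hMpos.le)).congr fun κ _ => ?_
          simp only [smul_eq_mul, id]
          rw [div_eq_inv_mul]
        · refine ((concaveOn_sqrt_min (hM e δe) D hDpos).smul (pow_nonneg hρ0 (t + 1))).congr
            fun κ _ => ?_
          simp only [smul_eq_mul]
          rw [mul_comm]
      have hbreak : ∀ j, j ≤ Fintype.card V → I (cumVol σ (hdeg e δe) j) ≤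
          cumVol σ (hdeg e δe) j / hM e δe + γ * (t + 1 : ℕ) / (2 + γ) +
            Real.sqrt (min (cumVol σ (hdeg e δe) j) (hM e δe - cumVol σ (hdeg e δe) j) / D)
              * ρ ^ (t + 1) := by
        intro j hj
        have hvj : cumVol σ (hdeg e δe) j = hvol e δe (sweepSet σ j) :=
          (sum_sweepSet σ (hdeg e δe) j).symm
        have hrec := LS_recursion e δe hcard hδe hd γ hγ S hS0 x hx a b hab σ hn hσ j
        rw [hvj]
        have hcle := hcut_le e δe hcard hδe (sweepSet σ j)
        have hjm := hjmin j hj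
        have hc0 : 0 ≤ hcut e δe (sweepSet σ j) :=
          sum_nonneg fun ε _ => hsplit_nonneg e δe hδe ε _
        have hK0 : 0 ≤ hvol e δe (sweepSet σ j) := sum_nonneg fun v _ => hd0 v
        have hKM : hvol e δe (sweepSet σ j) ≤ hM e δe :=
          sum_le_sum_of_subset_of_nonneg (subset_univ _) fun v _ _ => hd0 v
        rw [← hI] at hrec
        have hcond : φ * min (hvol e δe (sweepSet σ j)) (hM e δe - hvol e δe (sweepSet σ j))
            ≤ hcut e δe (sweepSet σ j) := by
          rcases hK0.eq_or_lt with h | h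
          · rw [min_eq_left (by linarith), ← h, mul_zero]; exact hc0
          rcases hKM.eq_or_lt with h' | h'
          · rw [min_eq_right (by linarith), h', sub_self, mul_zero]; exact hc0
          have := hjm h h'
          rwa [hcond, le_div_iff₀ (lt_min h (by linarith))] at this
        generalize hvol e δe (sweepSet σ j) = K at *
        generalize hcut e δe (sweepSet σ j) = c at *
        have hm0 : 0 ≤ min K (hM e δe - K) := le_min hK0 (by linarith)
        have hmK := min_le_left K (hM e δe - K)
        have hmK' := min_le_right K (hM e δe - K)
        have hshift := sqrt_shift_le K (hM e δe) D (c / 3) z hDpos hz0 hz1 hm0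
          (by have := mul_le_mul_of_nonneg_right hz3 hm0; linarith) (by linarith)
        have ih1 := ih (K - c / 3) ⟨by linarith, by linarith⟩
        have ih2 := ih (K + c / 3) ⟨by linarith, by linarith⟩
        have hρt : 0 ≤ ρ ^ t := pow_nonneg hρ0 t
        rw [← hρ] at hshift
        have hshift' := mul_le_mul_of_nonneg_right hshift hρt
        set R := Real.sqrt (min K (hM e δe - K) / D) with hR
        have hR0 : 0 ≤ R := Real.sqrt_nonneg _
        have hg2 : 0 < 2 + γ := by linarith
        have hA : 0 ≤ K / hM e δe + R * ρ ^ (t + 1) := by positivity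
        have e1 : (K - c / 3) / hM e δe + (K + c / 3) / hM e δe = 2 * (K / hM e δe) := by ring
        have e2 : 2 * R * ρ * ρ ^ t = 2 * (R * ρ ^ (t + 1)) := by ring
        have e3 : (2 + γ) * (γ * ((t + 1 : ℕ) : ℝ) / (2 + γ)) = γ * t + γ := by
          field_simp; push_cast; ring
        have e4 : (2 + γ) * (γ * (t : ℝ) / (2 + γ)) = γ * t := by field_simp
        have hB : 0 ≤ γ * (t : ℝ) / (2 + γ) := by positivity
        have hγA := mul_nonneg hγ.le hA
        have hγB := mul_nonneg hγ.le hB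
        refine le_of_mul_le_mul_left ?_ hg2
        linarith
      intro κ hκ
      exact LScurve_le_of_concave hn σ (hdeg e δe) x hd _ hconc hbreak κ (by rwa [hfull])
  exact main t k hk
end
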